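/- Let γ ∈ {0,1}, n ≥ 1, b ≥ 1 an integer, α ∈ (1/2, 1], and set r = nb/(2α − γ), assuming r > 1. Let p(·) ∈ P^log(ℝ^n) with p⁻ > 1. Then there exists a constant C > 0 such that for every u₀ ∈ L^{p(·)}(ℝ^n) ∩ L^r(ℝ^n): N_{p(·),r}((t,x) ↦ (𝔤_t^α ∗ u₀)(x)) ≤ C ‖u₀‖_{𝓛^{p(·)}_r}. -/

import Mathlib

open MeasureTheory Set
open scoped ENNReal FourierTransform

noncomputable section

/-- Euclidean space `ℝ^n`. -/
abbrev Rn (n : ℕ) := EuclideanSpace ℝ (Fin n)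

/-- Luxemburg norm of an `ℝ≥0∞`-valued function for a variable exponent `p`. -/
def luxNorm {Ω : Type*} [MeasurableSpace Ω] (μ : Measure Ω) (p : Ω → ℝ) (f : Ω → ℝ≥0∞) : ℝ≥0∞ :=
  sInf {lam : ℝ≥0∞ | 0 < lam ∧ ∫⁻ x, (f x / lam) ^ (p x) ∂μ ≤ 1}

/-- Luxemburg norm `‖f‖_{L^{p(·)}}` of a real-valued function. -/
def luxNormR {Ω : Type*} [MeasurableSpace Ω] (μ : Measure Ω) (p : Ω → ℝ) (f : Ω → ℝ) : ℝ≥0∞ :=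
  luxNorm μ p (fun x => ENNReal.ofReal |f x|)

/-- `p(·) ∈ P^log(Ω)`: measurable, with values in `[1,∞)` on `Ω`, locally log-Hölder
continuous on `Ω`, and satisfying the log-Hölder decay condition on `Ω`. -/
def IsPLog {E : Type*} [NormedAddCommGroup E] [MeasurableSpace E] (Ω : Set E) (p : E → ℝ) : Prop :=
  Measurable p ∧ (∀ x ∈ Ω, 1 ≤ p x) ∧
  ∃ C₁ > (0:ℝ), ∃ C₂ > (0:ℝ), ∃ pinf : ℝ,
    (∀ x ∈ Ω, ∀ y ∈ Ω, x ≠ y →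
      |1 / p x - 1 / p y| ≤ C₁ / Real.log (Real.exp 1 + 1 / ‖x - y‖)) ∧
    (∀ x ∈ Ω, |1 / p x - 1 / pinf| ≤ C₂ / Real.log (Real.exp 1 + ‖x‖))

/-- The fractional heat kernel `𝔤_t^α` on `ℝ^n`: the inverse Fourier transform of
`ξ ↦ exp (-t‖ξ‖^{2α})` (it is real-valued; we take the real part). -/
def gKer (n : ℕ) (α t : ℝ) (x : Rn n) : ℝ :=
  (𝓕⁻ (fun ξ : Rn n => (Real.exp (-t * ‖ξ‖ ^ (2 * α)) : ℂ)) x).re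

/-- Convolution on `ℝ^n`. -/
def conv (n : ℕ) (g f : Rn n → ℝ) (x : Rn n) : ℝ := ∫ y, g (x - y) * f y

/-- `x ↦ ess sup_{t>0} |u(t,x)|`, as an `ℝ≥0∞`-valued function. -/
def timeSup (n : ℕ) (u : ℝ → Rn n → ℝ) (x : Rn n) : ℝ≥0∞ :=
  essSup (fun t => ENNReal.ofReal |u t x|) (volume.restrict (Ioi (0:ℝ)))

/-- Mixed norm `‖f‖_{𝓛^{p(·)}_r} = max {‖f‖_{L^{p(·)}}, ‖f‖_{L^r}}`. -/
def mixedNorm (n : ℕ) (p : Rn n → ℝ) (r : ℝ) (f : Rn n → ℝ) : ℝ≥0∞ :=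
  max (luxNormR volume p f) (luxNormR volume (fun _ => r) f)

/-- `N_{p(·),r}(u) = ‖x ↦ ess sup_{t>0}|u(t,x)|‖_{𝓛^{p(·)}_r}`. -/
def mixedN (n : ℕ) (p : Rn n → ℝ) (r : ℝ) (u : ℝ → Rn n → ℝ) : ℝ≥0∞ :=
  max (luxNorm volume p (timeSup n u)) (luxNorm volume (fun _ => r) (timeSup n u))

/-!
The semigroup is dominated pointwise, uniformly in time, by the Hardy-Littlewood maximal function
`M` of the initial datum, and `M` is bounded on `L^{p(·)}` for log-Hölder `p` with `p⁻ > 1`.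

For the domination it suffices that the kernel is nonnegative, radially decreasing and of mass at
most one, since each of its superlevel sets is then a ball. These three properties hold for
Gaussians and are stable under mixtures and pointwise limits, so one only needs that
`l ↦ exp (-t * l ^ α)` is a mixture of exponentials `exp (-s * l)` (Bernstein's theorem, here by
hand): `1 - (1 - x) ^ α` has a power series with nonnegative coefficients of sum at most one, to
be evaluated at `x = exp (-l / N)`; if `f` is such a mixture, so is the compound Poisson transform
`exp (T * (f - 1))`; now take `T = t * N ^ α` and let `N → ∞`.

For the boundedness, log-Hölder continuity permits replacing the exponent `p y` by `p x` inside
averages over balls around `x`, up to an integrable error; this gives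
`M F ^ (p / m) ≲ M (F ^ (p / m)) + W` with `m > 1` and `W ∈ L^m`, and `M` is bounded on `L^m`.
-/

section Luxemburg

variable {Ω : Type*} [MeasurableSpace Ω] {μ : Measure Ω}

lemma luxNorm_mono {p : Ω → ℝ} (hp : ∀ᵐ x ∂μ, 0 ≤ p x) {f g : Ω → ℝ≥0∞} (h : ∀ x, f x ≤ g x) :
    luxNorm μ p f ≤ luxNorm μ p g := by
  refine sInf_le_sInf fun c hc => ⟨hc.1, (lintegral_mono_ae ?_).trans hc.2⟩
  filter_upwards [hp] with x hx
  gcongr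
  exact h x

lemma luxNorm_le_const_mul {p q : Ω → ℝ} {f g : Ω → ℝ≥0∞} {C : ℝ≥0∞} (hC : C ≠ 0) (hC' : C ≠ ⊤)
    (h : ∀ c, 0 < c → c ≠ ⊤ → ∫⁻ x, (f x / c) ^ p x ∂μ ≤ 1 →
      ∫⁻ x, (g x / (C * c)) ^ q x ∂μ ≤ 1) :
    luxNorm μ q g ≤ C * luxNorm μ p f := by
  rw [← ENNReal.div_le_iff' hC hC', luxNorm, luxNorm]
  refine le_sInf fun c ⟨hc0, hc⟩ => ?_
  rcases eq_or_ne c ⊤ with rfl | hct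
  · exact le_top
  exact ENNReal.div_le_of_le_mul' (sInf_le ⟨ENNReal.mul_pos hC hc0.ne', h c hc0 hct hc⟩)

end Luxemburg

section LayerCake

variable {Ω : Type*} [MeasurableSpace Ω]

lemma lintegral_Ioi_rpow (s : ℝ) : ∫⁻ t in Ioi (0 : ℝ), ENNReal.ofReal (t ^ s) = ⊤ := by
  by_contra h
  refine not_integrableOn_Ioi_rpow s ⟨by fun_prop, ?_⟩
  rw [hasFiniteIntegral_iff_ofReal]
  · exact lt_top_iff_ne_top.2 h
  · filter_upwards [ae_restrict_mem measurableSet_Ioi] with t ht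
    exact Real.rpow_nonneg (mem_Ioi.1 ht).le s

theorem lintegral_rpow_eq_lintegral_meas_ofReal_lt (μ : Measure Ω) {f : Ω → ℝ≥0∞}
    (hf : AEMeasurable f μ) {q : ℝ} (hq : 0 < q) :
    ∫⁻ x, f x ^ q ∂μ = ENNReal.ofReal q *
      ∫⁻ t in Ioi 0, μ {x | ENNReal.ofReal t < f x} * ENNReal.ofReal (t ^ (q - 1)) := by
  by_cases htop : μ {x | f x = ⊤} = 0
  · have hfin : ∀ᵐ x ∂μ, f x ≠ ⊤ := by simpa [ae_iff] using htop
    have hpow : ∫⁻ x, f x ^ q ∂μ = ∫⁻ x, ENNReal.ofReal ((f x).toReal ^ q) ∂μ :=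
      lintegral_congr_ae <| hfin.mono fun x hx => by
        dsimp only
        rw [← ENNReal.ofReal_rpow_of_nonneg ENNReal.toReal_nonneg hq.le, ENNReal.ofReal_toReal hx]
    rw [hpow, lintegral_rpow_eq_lintegral_meas_lt_mul μ (ae_of_all _ fun _ => ENNReal.toReal_nonneg)
      hf.ennreal_toReal hq]
    congr 1
    refine setLIntegral_congr_fun measurableSet_Ioi fun t ht => ?_
    congr 1
    refine measure_congr (hfin.mono fun x hx => propext ?_)
    exact (ENNReal.ofReal_lt_iff_lt_toReal (mem_Ioi.1 ht).le hx).symm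
  · have hleft : ∫⁻ x, f x ^ q ∂μ = ⊤ :=
      lintegral_eq_top_of_measure_eq_top_ne_zero (hf.pow_const q) <| by
        simpa [ENNReal.rpow_eq_top_iff_of_pos hq] using htop
    have hright : ∫⁻ t in Ioi (0 : ℝ), μ {x | f x = ⊤} * ENNReal.ofReal (t ^ (q - 1)) = ⊤ := by
      rw [lintegral_const_mul _ (by fun_prop), lintegral_Ioi_rpow, ENNReal.mul_top htop]
    rw [hleft, eq_comm, ENNReal.mul_eq_top]
    refine Or.inl ⟨by simpa using hq, eq_top_mono (lintegral_mono fun t => ?_) hright⟩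
    refine mul_le_mul_left (measure_mono fun x (hx : f x = ⊤) => ?_) _
    simp [hx]

lemma lintegral_rpow_sub_one_withDensity (μ : Measure Ω) {m : ℝ} (hm : 1 ≤ m) {f : Ω → ℝ≥0∞}
    (hf : Measurable f) :
    ∫⁻ x, f x ^ (m - 1) ∂(μ.withDensity f) = ∫⁻ x, f x ^ m ∂μ := by
  rw [lintegral_withDensity_eq_lintegral_mul _ hf (hf.pow_const _)]
  refine lintegral_congr fun x => ?_
  conv_rhs => rw [← add_sub_cancel 1 m]
  rw [ENNReal.rpow_add_of_nonneg _ _ zero_le_one (sub_nonneg.2 hm), ENNReal.rpow_one, Pi.mul_apply]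

end LayerCake

section MaximalFunction

variable {E : Type*} [NormedAddCommGroup E] [MeasurableSpace E]

/-- The centred Hardy-Littlewood maximal function. The supremum runs over all real radii; the
empty balls of nonpositive radius contribute `0`. -/
def maximalFunction (μ : Measure E) (F : E → ℝ≥0∞) (x : E) : ℝ≥0∞ :=
  ⨆ R : ℝ, ⨍⁻ y in Metric.ball x R, F y ∂μ

variable {μ : Measure E}

lemma setLAverage_ball_le_maximalFunction (F : E → ℝ≥0∞) (x : E) (R : ℝ) :
    ⨍⁻ y in Metric.ball x R, F y ∂μ ≤ maximalFunction μ F x :=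
  le_iSup (fun R : ℝ => ⨍⁻ y in Metric.ball x R, F y ∂μ) R

lemma maximalFunction_le_iff {F : E → ℝ≥0∞} {x : E} {a : ℝ≥0∞} :
    maximalFunction μ F x ≤ a ↔ ∀ R > 0, ⨍⁻ y in Metric.ball x R, F y ∂μ ≤ a := by
  refine ⟨fun h R _ => (setLAverage_ball_le_maximalFunction F x R).trans h, fun h => ?_⟩
  refine iSup_le fun R => ?_
  rcases le_or_gt R 0 with hR | hR
  · simp [Metric.ball_eq_empty.2 hR]
  · exact h R hR

lemma lt_maximalFunction_iff {F : E → ℝ≥0∞} {x : E} {a : ℝ≥0∞} :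
    a < maximalFunction μ F x ↔ ∃ R > 0, a < ⨍⁻ y in Metric.ball x R, F y ∂μ := by
  simpa using (maximalFunction_le_iff (μ := μ) (F := F) (x := x) (a := a)).not

lemma maximalFunction_div_const {F : E → ℝ≥0∞} (hF : Measurable F) (c : ℝ≥0∞) (x : E) :
    maximalFunction μ (fun y => F y / c) x = maximalFunction μ F x / c := by
  simp_rw [maximalFunction, ENNReal.iSup_div, setLAverage_eq, div_eq_mul_inv,
    lintegral_mul_const c⁻¹ hF, mul_right_comm]

lemma mul_maximalFunction_rpow_le {F : E → ℝ≥0∞} {κ a : ℝ≥0∞} {s : ℝ} (hs : 0 < s) {x : E}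
    (h : ∀ R > 0, (κ * ⨍⁻ y in Metric.ball x R, F y ∂μ) ^ s ≤ a) :
    (κ * maximalFunction μ F x) ^ s ≤ a := by
  rw [← ENNReal.le_rpow_inv_iff hs, maximalFunction, ENNReal.mul_iSup]
  refine iSup_le fun R => ?_
  rcases le_or_gt R 0 with hR | hR
  · simp [Metric.ball_eq_empty.2 hR]
  · exact (ENNReal.le_rpow_inv_iff hs).2 (h R hR)

lemma maximalFunction_mono {F G : E → ℝ≥0∞} (h : ∀ y, F y ≤ G y) (x : E) :
    maximalFunction μ F x ≤ maximalFunction μ G x :=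
  iSup_mono fun _ => laverage_mono_ae (ae_of_all _ h)

lemma maximalFunction_add_le {F : E → ℝ≥0∞} (hF : Measurable F) (G : E → ℝ≥0∞) (x : E) :
    maximalFunction μ (fun y => F y + G y) x ≤ maximalFunction μ F x + maximalFunction μ G x := by
  refine iSup_le fun R => ?_
  rw [setLAverage_eq, lintegral_add_left hF, ENNReal.add_div, ← setLAverage_eq, ← setLAverage_eq]
  exact add_le_add (setLAverage_ball_le_maximalFunction F x R)
    (setLAverage_ball_le_maximalFunction G x R)

lemma mul_maximalFunction_le_of_le_add {F F₁ F₂ : E → ℝ≥0∞} (hF₁ : Measurable F₁)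
    (hF : ∀ y, F y ≤ F₁ y + F₂ y) {κ₁ κ₂ a : ℝ≥0∞} {x : E}
    (h₁ : κ₁ * maximalFunction μ F₁ x ≤ a) (h₂ : κ₂ * maximalFunction μ F₂ x ≤ a) :
    min κ₁ κ₂ / 2 * maximalFunction μ F x ≤ a := by
  calc min κ₁ κ₂ / 2 * maximalFunction μ F x
      ≤ min κ₁ κ₂ / 2 * (maximalFunction μ F₁ x + maximalFunction μ F₂ x) := by
        gcongr
        exact (maximalFunction_mono hF x).trans (maximalFunction_add_le hF₁ F₂ x)
    _ = (min κ₁ κ₂ * maximalFunction μ F₁ x) / 2 + (min κ₁ κ₂ * maximalFunction μ F₂ x) / 2 := by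
        simp only [div_eq_mul_inv]
        ring
    _ ≤ a / 2 + a / 2 := by
        gcongr
        · exact (mul_le_mul_left (min_le_left _ _) _).trans h₁
        · exact (mul_le_mul_left (min_le_right _ _) _).trans h₂
    _ = a := ENNReal.add_halves a

lemma maximalFunction_const_le (c : ℝ≥0∞) (x : E) : maximalFunction μ (fun _ => c) x ≤ c :=
  iSup_le fun R => by
    rw [setLAverage_eq, setLIntegral_const, mul_div_assoc]
    exact mul_le_of_le_one_right' ENNReal.div_self_le_one

lemma lowerSemicontinuous_setLIntegral_ball (F : E → ℝ≥0∞) (R : ℝ) :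
    LowerSemicontinuous fun x => ∫⁻ y in Metric.ball x R, F y ∂μ := by
  intro x a hxa
  obtain ⟨u, hu_mono, hu_lt, hu_tendsto⟩ := exists_seq_strictMono_tendsto R
  have hball : Metric.ball x R = ⋃ k, Metric.ball x (u k) := by
    refine (iUnion_subset fun k => Metric.ball_subset_ball (hu_lt k).le).antisymm' fun y hy => ?_
    obtain ⟨k, hk⟩ := (hu_tendsto.eventually (lt_mem_nhds (Metric.mem_ball.1 hy))).exists
    exact mem_iUnion.2 ⟨k, hk⟩
  simp only [hball] at hxa
  rw [setLIntegral_iUnion_of_directed F (Monotone.directed_le fun i j hij =>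
    Metric.ball_subset_ball (hu_mono.monotone hij))] at hxa
  obtain ⟨k, hk⟩ := lt_iSup_iff.1 hxa
  filter_upwards [Metric.ball_mem_nhds x (sub_pos.2 (hu_lt k))] with z hz
  refine hk.trans_le (lintegral_mono_set (Metric.ball_subset_ball' ?_))
  rw [dist_comm]
  linarith [Metric.mem_ball.1 hz]

variable [NormedSpace ℝ E] [FiniteDimensional ℝ E] [μ.IsAddHaarMeasure]

lemma setLIntegral_ball_le_maximalFunction_mul (F : E → ℝ≥0∞) (x : E) (R : ℝ) :
    ∫⁻ y in Metric.ball x R, F y ∂μ ≤ maximalFunction μ F x * μ (Metric.ball x R) := by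
  rcases le_or_gt R 0 with hR | hR
  · simp [Metric.ball_eq_empty.2 hR]
  rw [← ENNReal.div_le_iff (Metric.measure_ball_pos μ x hR).ne' measure_ball_lt_top.ne,
    ← setLAverage_eq]
  exact setLAverage_ball_le_maximalFunction F x R

variable [BorelSpace E]

lemma lowerSemicontinuous_maximalFunction (μ : Measure E) [μ.IsAddHaarMeasure] (F : E → ℝ≥0∞) :
    LowerSemicontinuous (maximalFunction μ F) := by
  intro x a hxa
  obtain ⟨R, hR, hxR⟩ := lt_maximalFunction_iff.1 hxa
  have hV (z : E) : a < ⨍⁻ y in Metric.ball z R, F y ∂μ ↔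
      a * μ (Metric.ball 0 R) < ∫⁻ y in Metric.ball z R, F y ∂μ := by
    rw [setLAverage_eq, Measure.addHaar_ball_center,
      ENNReal.lt_div_iff_mul_lt (Or.inl (Metric.measure_ball_pos μ 0 hR).ne')
        (Or.inl measure_ball_lt_top.ne)]
  filter_upwards [lowerSemicontinuous_setLIntegral_ball F R x _ ((hV x).1 hxR)] with z hz
  exact lt_maximalFunction_iff.2 ⟨R, hR, (hV z).2 hz⟩

lemma measurable_maximalFunction (μ : Measure E) [μ.IsAddHaarMeasure] (F : E → ℝ≥0∞) :
    Measurable (maximalFunction μ F) :=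
  (lowerSemicontinuous_maximalFunction μ F).measurable

open Module (finrank)

lemma exists_lt_of_measure_ball_le [Nontrivial E] {c : ℝ≥0∞} (hc : c ≠ ⊤) :
    ∃ B : ℝ, ∀ (x : E) (R : ℝ), μ (Metric.ball x R) ≤ c → R < B := by
  have htop : Filter.Tendsto (fun k : ℕ => μ (Metric.ball (0 : E) k)) Filter.atTop (nhds ⊤) := by
    rw [← measure_univ_of_isAddLeftInvariant μ, ← Metric.iUnion_ball_nat (0 : E)]
    exact tendsto_measure_iUnion_atTop fun i j hij =>
      Metric.ball_subset_ball (Nat.cast_le.2 hij)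
  obtain ⟨k, hk⟩ := (htop.eventually (lt_mem_nhds hc.lt_top)).exists
  refine ⟨k, fun x R hR => ?_⟩
  by_contra! h
  rw [Measure.addHaar_ball_center] at hR
  exact hk.not_ge ((measure_mono (Metric.ball_subset_ball h)).trans hR)

theorem mul_measure_le_of_forall_mul_measure_closedBall_le {F : E → ℝ≥0∞} {l : ℝ≥0∞} {t : Set E}
    {R : E → ℝ} {B : ℝ} (hR0 : ∀ x ∈ t, 0 < R x) (hRB : ∀ x ∈ t, R x ≤ B)
    (hR : ∀ x ∈ t, l * μ (Metric.closedBall x (R x)) ≤ ∫⁻ y in Metric.closedBall x (R x), F y ∂μ) :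
    l * μ t ≤ 5 ^ finrank ℝ E * ∫⁻ y, F y ∂μ := by
  obtain ⟨u, hut, hdisj, hcov⟩ := Vitali.exists_disjoint_subfamily_covering_enlargement_closedBall
    t id R B hRB 5 (by norm_num)
  have hu : u.Countable := hdisj.countable_of_nonempty_interior fun x hx => ⟨x,
    Metric.ball_subset_interior_closedBall (Metric.mem_ball_self (hR0 x (hut hx)))⟩
  have hsub : t ⊆ ⋃ b ∈ u, Metric.closedBall b (5 * R b) := fun x hx => by
    obtain ⟨b, hb, hb'⟩ := hcov x hx
    exact mem_biUnion hb (hb' (Metric.mem_closedBall_self (hR0 x hx).le))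
  have hscale (b : u) : μ (Metric.closedBall (b : E) (5 * R b))
      = 5 ^ finrank ℝ E * μ (Metric.closedBall (b : E) (R b)) := by
    rw [Measure.addHaar_closedBall_mul μ _ (by norm_num) (hR0 b (hut b.2)).le,
      Measure.addHaar_closedBall_center μ (b : E), ENNReal.ofReal_pow (by norm_num),
      ENNReal.ofReal_ofNat]
  have := hu.to_subtype
  calc l * μ t ≤ l * ∑' b : u, μ (Metric.closedBall (b : E) (5 * R b)) := by
        gcongr
        exact (measure_mono hsub).trans (measure_biUnion_le _ hu _)
    _ = 5 ^ finrank ℝ E * ∑' b : u, l * μ (Metric.closedBall (b : E) (R b)) := by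
        simp_rw [hscale, ENNReal.tsum_mul_left]
        ring
    _ ≤ 5 ^ finrank ℝ E * ∑' b : u, ∫⁻ y in Metric.closedBall (b : E) (R b), F y ∂μ := by
        gcongr with b
        exact hR b (hut b.2)
    _ ≤ 5 ^ finrank ℝ E * ∫⁻ y, F y ∂μ := by
        gcongr
        rw [← lintegral_biUnion (s := fun b => Metric.closedBall b (R b)) hu
          (fun _ _ => Metric.isClosed_closedBall.measurableSet) hdisj]
        exact setLIntegral_le_lintegral _ _

variable [Nontrivial E]

theorem mul_measure_lt_maximalFunction_le (F : E → ℝ≥0∞) {l : ℝ≥0∞} (hl0 : l ≠ 0) (hlt : l ≠ ⊤) :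
    l * μ {x | l < maximalFunction μ F x} ≤ 5 ^ finrank ℝ E * ∫⁻ y, F y ∂μ := by
  by_cases hfin : ∫⁻ y, F y ∂μ = ⊤
  · simp [hfin, ENNReal.mul_top]
  have hball : ∀ x ∈ {x | l < maximalFunction μ F x}, ∃ R > 0,
      l * μ (Metric.closedBall x R) ≤ ∫⁻ y in Metric.closedBall x R, F y ∂μ := by
    intro x hx
    obtain ⟨R, hR0, hR⟩ := lt_maximalFunction_iff.1 hx
    rw [setLAverage_eq, ← Measure.addHaar_closedBall_eq_addHaar_ball] at hR
    exact ⟨R, hR0,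
      (ENNReal.mul_le_of_le_div hR.le).trans (lintegral_mono_set Metric.ball_subset_closedBall)⟩
  choose! R hR0 hR using hball
  obtain ⟨B, hB⟩ := exists_lt_of_measure_ball_le (μ := μ)
    (ENNReal.div_ne_top hfin hl0 : (∫⁻ y, F y ∂μ) / l ≠ ⊤)
  refine mul_measure_le_of_forall_mul_measure_closedBall_le hR0 (B := B) (fun x hx => ?_) hR
  refine (hB x (R x) ?_).le
  rw [ENNReal.le_div_iff_mul_le (Or.inl hl0) (Or.inl hlt), mul_comm]
  refine (mul_le_mul_right (measure_mono Metric.ball_subset_closedBall) l).trans ?_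
  exact (hR x hx).trans (setLIntegral_le_lintegral _ _)

lemma mul_measure_two_mul_lt_maximalFunction_le {F : E → ℝ≥0∞} (hF : Measurable F) {a : ℝ≥0∞}
    (ha0 : a ≠ 0) (hat : a ≠ ⊤) :
    a * μ {x | 2 * a < maximalFunction μ F x} ≤
      5 ^ finrank ℝ E * ∫⁻ y in {y | a < F y}, F y ∂μ := by
  set s := {y | a < F y}
  have hs : MeasurableSet s := measurableSet_lt measurable_const hF
  have hsplit (x : E) : maximalFunction μ F x ≤ maximalFunction μ (s.indicator F) x + a :=
    calc maximalFunction μ F x ≤ maximalFunction μ (fun y => s.indicator F y + a) x := by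
          refine maximalFunction_mono (fun y => ?_) x
          by_cases hy : y ∈ s
          · simp [hy]
          · simpa [hy] using (not_lt.1 hy : F y ≤ a)
      _ ≤ maximalFunction μ (s.indicator F) x + a :=
          (maximalFunction_add_le (hF.indicator hs) _ x).trans
            (add_le_add_right (maximalFunction_const_le a x) _)
  have hsubset : {x | 2 * a < maximalFunction μ F x} ⊆
      {x | a < maximalFunction μ (s.indicator F) x} := by
    intro x (hx : 2 * a < maximalFunction μ F x)
    rw [two_mul] at hx
    exact lt_of_add_lt_add_right (hx.trans_le (hsplit x))
  rw [← lintegral_indicator hs]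
  exact (mul_le_mul_right (measure_mono hsubset) a).trans
    (mul_measure_lt_maximalFunction_le _ ha0 hat)

lemma measure_lt_maximalFunction_div_two_mul_rpow_le {F : E → ℝ≥0∞} (hF : Measurable F) {q t : ℝ}
    (hq : q ≠ 0) (ht : 0 < t) :
    μ {x | ENNReal.ofReal t < maximalFunction μ F x / 2} * ENNReal.ofReal (t ^ q) ≤
      5 ^ finrank ℝ E *
        ((μ.withDensity F) {x | ENNReal.ofReal t < F x} * ENNReal.ofReal (t ^ (q - 1))) := by
  have hpow : ENNReal.ofReal (t ^ q) = ENNReal.ofReal t * ENNReal.ofReal (t ^ (q - 1)) := by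
    rw [← ENNReal.ofReal_mul ht.le, ← Real.rpow_one_add' ht.le (by simpa using hq), add_sub_cancel]
  simp_rw [ENNReal.lt_div_iff_mul_lt (Or.inl two_ne_zero) (Or.inl ENNReal.ofNat_ne_top),
    mul_comm _ (2 : ℝ≥0∞)]
  rw [hpow, ← mul_assoc, ← mul_assoc, mul_comm (μ _),
    withDensity_apply _ (measurableSet_lt measurable_const hF)]
  exact mul_le_mul_left (mul_measure_two_mul_lt_maximalFunction_le hF (by simpa using ht)
    ENNReal.ofReal_ne_top) _

theorem lintegral_maximalFunction_rpow_le {m : ℝ} (hm : 1 < m) {F : E → ℝ≥0∞} (hF : Measurable F) :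
    ∫⁻ x, maximalFunction μ F x ^ m ∂μ ≤
      2 ^ m * 5 ^ finrank ℝ E * ENNReal.ofReal (m / (m - 1)) * ∫⁻ x, F x ^ m ∂μ := by
  have hm0 : 0 < m := by linarith
  have hm1 : 0 < m - 1 := by linarith
  set ν := μ.withDensity F
  calc ∫⁻ x, maximalFunction μ F x ^ m ∂μ
      = 2 ^ m * ∫⁻ x, (maximalFunction μ F x / 2) ^ m ∂μ := by
        rw [← lintegral_const_mul' _ _ (by finiteness)]
        refine lintegral_congr fun x => ?_
        rw [← ENNReal.mul_rpow_of_nonneg _ _ hm0.le,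
          ENNReal.mul_div_cancel two_ne_zero ENNReal.ofNat_ne_top]
    _ = 2 ^ m * (ENNReal.ofReal m * ∫⁻ t in Ioi 0,
          μ {x | ENNReal.ofReal t < maximalFunction μ F x / 2} * ENNReal.ofReal (t ^ (m - 1))) := by
        rw [lintegral_rpow_eq_lintegral_meas_ofReal_lt μ
          ((measurable_maximalFunction μ F).div_const 2).aemeasurable hm0]
    _ ≤ 2 ^ m * (ENNReal.ofReal m * (5 ^ finrank ℝ E * ∫⁻ t in Ioi 0,
          ν {x | ENNReal.ofReal t < F x} * ENNReal.ofReal (t ^ (m - 1 - 1)))) := by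
        rw [← lintegral_const_mul' (5 ^ finrank ℝ E) _ (by finiteness)]
        exact mul_le_mul_right (mul_le_mul_right (setLIntegral_mono' measurableSet_Ioi fun t ht =>
          measure_lt_maximalFunction_div_two_mul_rpow_le hF hm1.ne' ht) _) _
    _ = 2 ^ m * (ENNReal.ofReal m * (5 ^ finrank ℝ E *
          ((ENNReal.ofReal (m - 1))⁻¹ * ∫⁻ x, F x ^ m ∂μ))) := by
        rw [← lintegral_rpow_sub_one_withDensity μ hm.le hF,
          lintegral_rpow_eq_lintegral_meas_ofReal_lt ν hF.aemeasurable hm1,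
          ENNReal.inv_mul_cancel_left (by simpa using hm1) ENNReal.ofReal_ne_top]
    _ = _ := by
        rw [ENNReal.ofReal_div_of_pos hm1, div_eq_mul_inv]
        ring

end MaximalFunction

section Average

variable {Ω : Type*} [MeasurableSpace Ω] {μ : Measure Ω}

lemma laverage_rpow_le {F : Ω → ℝ≥0∞} (hF : AEMeasurable F μ) {s : ℝ} (hs : 1 ≤ s) :
    (⨍⁻ y, F y ∂μ) ^ s ≤ ⨍⁻ y, F y ^ s ∂μ := by
  have hmass : ((μ univ)⁻¹ • μ) univ ≤ 1 := by
    rw [Measure.smul_apply, smul_eq_mul]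
    exact ENNReal.inv_mul_le_one _
  have hholder := eLpNorm'_le_eLpNorm'_mul_rpow_measure_univ one_pos hs
    (hF.smul_measure (μ univ)⁻¹).aestronglyMeasurable
  simp only [eLpNorm', enorm_eq_self, ENNReal.rpow_one, one_div, inv_one] at hholder
  rw [laverage, laverage, ← ENNReal.le_rpow_inv_iff (by linarith)]
  refine hholder.trans (mul_le_of_le_one_right' (ENNReal.rpow_le_one hmass ?_))
  exact sub_nonneg.2 (inv_le_one_of_one_le₀ hs)

lemma setLAverage_le_rpow_of_inv_le {s : Ω → ℝ} {S : Set Ω} (hS : MeasurableSet S) {Q : ℝ}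
    (hQ0 : 0 < Q) (hQ1 : Q ≤ 1) (hQ : ∀ y ∈ S, Q⁻¹ ≤ s y) {F : Ω → ℝ≥0∞} (hF : Measurable F)
    (hF1 : ∀ y, F y = 0 ∨ 1 ≤ F y) :
    ⨍⁻ y in S, F y ∂μ ≤ (⨍⁻ y in S, F y ^ s y ∂μ) ^ Q := by
  rw [← inv_inv Q, ENNReal.le_rpow_inv_iff (by positivity)]
  refine (laverage_rpow_le hF.aemeasurable ((one_le_inv₀ hQ0).2 hQ1)).trans ?_
  rw [setLAverage_eq, setLAverage_eq]
  refine ENNReal.div_le_div_right (setLIntegral_mono' hS fun y hy => ?_) _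
  rcases hF1 y with h | h
  · rw [h, ENNReal.zero_rpow_of_pos (by positivity)]
    exact zero_le
  · exact ENNReal.rpow_le_rpow_of_exponent_le h (hQ y hy)

end Average

section LogHolder

variable {E : Type*} [NormedAddCommGroup E]

lemma one_le_log_exp_one_add {t : ℝ} (ht : 0 ≤ t) : 1 ≤ Real.log (Real.exp 1 + t) := by
  rw [Real.le_log_iff_exp_le (by positivity)]
  linarith

lemma abs_min_sub_min_right_le (a b c : ℝ) : |min a c - min b c| ≤ |a - b| := by
  simpa using abs_min_sub_min_le_max a c b c

/-- Local log-Hölder continuity, with the constant left existential; it is applied to the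
reciprocal of a variable exponent. -/
def LocallyLogHolder (g : E → ℝ) : Prop :=
  ∃ A > 0, ∀ x y, x ≠ y → |g x - g y| ≤ A / Real.log (Real.exp 1 + 1 / ‖x - y‖)

/-- Log-Hölder decay towards some limit value `q` at infinity; it is applied to the reciprocal of
a variable exponent. -/
def LogHolderDecay (g : E → ℝ) : Prop :=
  ∃ D > 0, ∃ q, ∀ x, |g x - q| ≤ D / Real.log (Real.exp 1 + ‖x‖)

lemma LocallyLogHolder.const_mul {g : E → ℝ} (hg : LocallyLogHolder g) {c : ℝ} (hc : 0 < c) :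
    LocallyLogHolder fun x => c * g x := by
  obtain ⟨A, hA, h⟩ := hg
  refine ⟨c * A, mul_pos hc hA, fun x y hxy => ?_⟩
  rw [← mul_sub, abs_mul, abs_of_pos hc, mul_div_assoc]
  exact mul_le_mul_of_nonneg_left (h x y hxy) hc.le

lemma LogHolderDecay.const_mul {g : E → ℝ} (hg : LogHolderDecay g) {c : ℝ} (hc : 0 < c) :
    LogHolderDecay fun x => c * g x := by
  obtain ⟨D, hD, q, h⟩ := hg
  refine ⟨c * D, mul_pos hc hD, c * q, fun x => ?_⟩
  rw [← mul_sub, abs_mul, abs_of_pos hc, mul_div_assoc]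
  exact mul_le_mul_of_nonneg_left (h x) hc.le

lemma LocallyLogHolder.min_const {g : E → ℝ} (hg : LocallyLogHolder g) (c : ℝ) :
    LocallyLogHolder fun x => min (g x) c := by
  obtain ⟨A, hA, h⟩ := hg
  exact ⟨A, hA, fun x y hxy => (abs_min_sub_min_right_le _ _ c).trans (h x y hxy)⟩

lemma LogHolderDecay.min_const {g : E → ℝ} (hg : LogHolderDecay g) (c : ℝ) :
    LogHolderDecay fun x => min (g x) c := by
  obtain ⟨D, hD, q, h⟩ := hg
  exact ⟨D, hD, min q c, fun x => (abs_min_sub_min_right_le _ _ c).trans (h x)⟩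

lemma LocallyLogHolder.exists_forall_ball_le {s : E → ℝ} (hs : LocallyLogHolder fun x => (s x)⁻¹) :
    ∃ A > 0, ∀ x, ∀ R > 0, ∀ y ∈ Metric.ball x R,
      (s y)⁻¹ ≤ (s x)⁻¹ + A / Real.log (Real.exp 1 + 1 / R) := by
  obtain ⟨A, hA, h⟩ := hs
  refine ⟨A, hA, fun x R hR y hy => ?_⟩
  have hlogR := one_le_log_exp_one_add (one_div_nonneg.2 hR.le)
  rcases eq_or_ne y x with rfl | hyx
  · exact le_add_of_nonneg_right (by positivity)
  have hpos : 0 < ‖y - x‖ := norm_pos_iff.2 (sub_ne_zero.2 hyx)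
  have hle : ‖y - x‖ ≤ R := (mem_ball_iff_norm.1 hy).le
  rw [← sub_le_iff_le_add']
  calc (s y)⁻¹ - (s x)⁻¹ ≤ A / Real.log (Real.exp 1 + 1 / ‖y - x‖) :=
        (le_abs_self _).trans (h y x hyx)
    _ ≤ A / Real.log (Real.exp 1 + 1 / R) := by gcongr

variable [MeasurableSpace E]

lemma IsPLog.locallyLogHolder {p : E → ℝ} (hp : IsPLog univ p) :
    LocallyLogHolder fun x => (p x)⁻¹ := by
  obtain ⟨-, -, A, hA, -, -, -, h, -⟩ := hp
  exact ⟨A, hA, fun x y hxy => by simpa only [one_div] using h x trivial y trivial hxy⟩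

lemma IsPLog.logHolderDecay {p : E → ℝ} (hp : IsPLog univ p) :
    LogHolderDecay fun x => (p x)⁻¹ := by
  obtain ⟨-, -, -, -, D, hD, q, -, h⟩ := hp
  exact ⟨D, hD, 1 / q, fun x => by simpa only [one_div] using h x trivial⟩

lemma isPLog_const (Ω : Set E) {r : ℝ} (hr : 1 ≤ r) : IsPLog Ω fun _ => r := by
  have hlog {t : ℝ} (ht : 0 ≤ t) : 0 ≤ 1 / Real.log (Real.exp 1 + t) :=
    one_div_nonneg.2 (zero_le_one.trans (one_le_log_exp_one_add ht))
  refine ⟨measurable_const, fun _ _ => hr, 1, one_pos, 1, one_pos, r, fun x _ y _ _ => ?_,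
    fun x _ => ?_⟩
  · simpa using hlog (t := 1 / ‖x - y‖) (by positivity)
  · simpa using hlog (norm_nonneg x)

end LogHolder

section LocalEstimate

variable {E : Type*} [NormedAddCommGroup E] [MeasurableSpace E] {μ : Measure E}

lemma mul_rpow_le_rpow_of_le_inv {κ a v : ℝ≥0∞} {θ Q w : ℝ} (hv0 : v ≠ 0) (hvt : v ≠ ⊤)
    (hκ1 : κ ≤ 1) (hκ : κ ≤ v ^ w) (ha : a ≤ v⁻¹) (hw : 0 ≤ w) (hθQ : θ ≤ Q) (hQ : Q ≤ θ + w) :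
    κ * a ^ Q ≤ a ^ θ := by
  rcases le_or_gt a 1 with h1 | h1
  · exact mul_le_of_le_one_of_le hκ1 (ENNReal.rpow_le_rpow_of_exponent_ge h1 hθQ)
  have ha0 : a ≠ 0 := (zero_lt_one.trans h1).ne'
  have hat : a ≠ ⊤ := ne_top_of_le_ne_top (ENNReal.inv_ne_top.2 hv0) ha
  calc κ * a ^ Q ≤ v ^ w * a ^ (θ + w) := by
        gcongr
        exact h1.le
    _ = a ^ θ * (v * a) ^ w := by
        rw [ENNReal.rpow_add _ _ ha0 hat, ENNReal.mul_rpow_of_nonneg _ _ hw]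
        ring
    _ ≤ a ^ θ * 1 := by
        gcongr
        refine ENNReal.rpow_le_one ?_ hw
        calc v * a ≤ v * v⁻¹ := by gcongr
          _ = 1 := ENNReal.mul_inv_cancel hv0 hvt
    _ = a ^ θ := mul_one _

variable [NormedSpace ℝ E] [FiniteDimensional ℝ E] [BorelSpace E]

open Module (finrank)

lemma exists_le_measure_ball_rpow (μ : Measure E) [μ.IsAddHaarMeasure] {A : ℝ} (hA : 0 ≤ A) :
    ∃ κ : ℝ≥0∞, κ ≠ 0 ∧ κ ≤ 1 ∧ ∀ x, ∀ R > 0,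
      κ ≤ μ (Metric.ball x R) ^ (A / Real.log (Real.exp 1 + 1 / R)) := by
  set V := (μ (Metric.ball (0 : E) 1)).toReal with hV
  have hVt : μ (Metric.ball (0 : E) 1) ≠ ⊤ := measure_ball_lt_top.ne
  have hV0 : 0 < V := ENNReal.toReal_pos (Metric.measure_ball_pos μ _ one_pos).ne' hVt
  set c := |Real.log V| + finrank ℝ E with hc
  refine ⟨ENNReal.ofReal (Real.exp (-(A * c))), ?_, ?_, fun x R hR => ?_⟩
  · exact (ENNReal.ofReal_pos.2 (Real.exp_pos _)).ne'
  · rw [ENNReal.ofReal_le_one, Real.exp_le_one_iff, neg_nonpos]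
    positivity
  set L := Real.log (Real.exp 1 + 1 / R)
  have hL1 : 1 ≤ L := one_le_log_exp_one_add (by positivity)
  have hlogR : -Real.log R ≤ L := by
    rw [← Real.log_inv, ← one_div]
    exact Real.log_le_log (by positivity) (by linarith [Real.exp_pos 1])
  have hlogV : -Real.log V ≤ |Real.log V| * L :=
    (neg_le_abs _).trans (le_mul_of_one_le_right (abs_nonneg _) hL1)
  have hlog : -(c * L) ≤ finrank ℝ E * Real.log R + Real.log V := by
    have := mul_le_mul_of_nonneg_left hlogR (Nat.cast_nonneg (finrank ℝ E))
    rw [hc, add_mul]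
    linarith
  rw [Measure.addHaar_ball_of_pos μ x hR, ← ENNReal.ofReal_toReal hVt, ← hV,
    ← ENNReal.ofReal_mul (by positivity), ENNReal.ofReal_rpow_of_pos (by positivity),
    Real.rpow_def_of_pos (by positivity), Real.log_mul (by positivity) hV0.ne', Real.log_pow]
  refine ENNReal.ofReal_le_ofReal (Real.exp_le_exp.2 ?_)
  calc -(A * c) = -(c * L) * (A / L) := by field_simp
    _ ≤ _ := by gcongr

theorem LocallyLogHolder.exists_mul_setLAverage_ball_le {s : E → ℝ}
    (hs : LocallyLogHolder fun x => (s x)⁻¹) (hs1 : ∀ x, 1 ≤ s x) (μ : Measure E)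
    [μ.IsAddHaarMeasure] :
    ∃ κ : ℝ≥0∞, κ ≠ 0 ∧ ∀ F : E → ℝ≥0∞, Measurable F → (∀ y, F y = 0 ∨ 1 ≤ F y) →
      ∫⁻ y, F y ^ s y ∂μ ≤ 1 → ∀ x, ∀ R > 0, κ * ⨍⁻ y in Metric.ball x R, F y ∂μ ≤
        (⨍⁻ y in Metric.ball x R, F y ^ s y ∂μ) ^ (s x)⁻¹ := by
  obtain ⟨A, hA, hball⟩ := hs.exists_forall_ball_le
  obtain ⟨κ, hκ0, hκ1, hκ⟩ := exists_le_measure_ball_rpow μ hA.le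
  refine ⟨κ, hκ0, fun F hF hF1 hint x R hR => ?_⟩
  set w := A / Real.log (Real.exp 1 + 1 / R)
  have hw : 0 ≤ w :=
    div_nonneg hA.le (zero_le_one.trans (one_le_log_exp_one_add (one_div_nonneg.2 hR.le)))
  have hs0 (y : E) : 0 < s y := zero_lt_one.trans_le (hs1 y)
  set Q := min ((s x)⁻¹ + w) 1
  have hsQ : (s x)⁻¹ ≤ Q := le_min (by linarith) (inv_le_one_of_one_le₀ (hs1 x))
  have hQ0 : 0 < Q := (inv_pos.2 (hs0 x)).trans_le hsQ
  have hQs : ∀ y ∈ Metric.ball x R, Q⁻¹ ≤ s y := fun y hy =>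
    inv_le_of_inv_le₀ (hs0 y) (le_min (hball x R hR y hy) (inv_le_one_of_one_le₀ (hs1 y)))
  have hmodular : ⨍⁻ y in Metric.ball x R, F y ^ s y ∂μ ≤ (μ (Metric.ball x R))⁻¹ := by
    rw [setLAverage_eq, ← one_div]
    exact ENNReal.div_le_div_right ((setLIntegral_le_lintegral _ _).trans hint) _
  refine (mul_le_mul_right (setLAverage_le_rpow_of_inv_le Metric.isOpen_ball.measurableSet hQ0
    (min_le_right _ _) hQs hF hF1) κ).trans ?_
  exact mul_rpow_le_rpow_of_le_inv (Metric.measure_ball_pos μ x hR).ne' measure_ball_lt_top.ne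
    hκ1 (hκ x R hR) hmodular hw hsQ (min_le_left _ _)

theorem LocallyLogHolder.exists_mul_maximalFunction_le {s : E → ℝ}
    (hs : LocallyLogHolder fun x => (s x)⁻¹) (hs1 : ∀ x, 1 ≤ s x) (μ : Measure E)
    [μ.IsAddHaarMeasure] :
    ∃ κ : ℝ≥0∞, κ ≠ 0 ∧ ∀ F : E → ℝ≥0∞, Measurable F → (∀ y, F y = 0 ∨ 1 ≤ F y) →
      ∫⁻ y, F y ^ s y ∂μ ≤ 1 → ∀ x,
        (κ * maximalFunction μ F x) ^ s x ≤ maximalFunction μ (fun y => F y ^ s y) x := by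
  obtain ⟨κ, hκ0, hκ⟩ := hs.exists_mul_setLAverage_ball_le hs1 μ
  refine ⟨κ, hκ0, fun F hF hF1 hint x => ?_⟩
  have hsx := zero_lt_one.trans_le (hs1 x)
  refine mul_maximalFunction_rpow_le hsx fun R hR => ?_
  exact ((ENNReal.le_rpow_inv_iff hsx).1 (hκ F hF hF1 hint x R hR)).trans
    (setLAverage_ball_le_maximalFunction _ x R)

end LocalEstimate

section DecayEstimate

variable {E : Type*} [NormedAddCommGroup E]

/-- The weight `(e + ‖x‖)^(-N)`: the error term that pays for replacing the exponent at one point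
by the exponent at another in the estimates at infinity. -/
def decayWeight (N : ℝ) (x : E) : ℝ≥0∞ :=
  ENNReal.ofReal ((Real.exp 1 + ‖x‖) ^ (-N))

lemma decayWeight_ne_zero (N : ℝ) (x : E) : decayWeight N x ≠ 0 :=
  (ENNReal.ofReal_pos.2 (by positivity)).ne'

lemma decayWeight_le_one {N : ℝ} (hN : 0 ≤ N) (x : E) : decayWeight N x ≤ 1 := by
  refine ENNReal.ofReal_le_one.2 (Real.rpow_le_one_of_one_le_of_nonpos ?_ (neg_nonpos.2 hN))
  linarith [Real.add_one_le_exp (1 : ℝ), norm_nonneg x]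

lemma measurable_decayWeight [MeasurableSpace E] [OpensMeasurableSpace E] (N : ℝ) :
    Measurable (decayWeight N : E → ℝ≥0∞) := by
  unfold decayWeight
  fun_prop

lemma lintegral_decayWeight_ne_top [NormedSpace ℝ E] [FiniteDimensional ℝ E] [MeasurableSpace E]
    [BorelSpace E] (μ : Measure E) [μ.IsAddHaarMeasure] {N : ℝ}
    (hN : Module.finrank ℝ E < N) : ∫⁻ x, decayWeight N x ∂μ ≠ ⊤ := by
  refine ne_top_of_le_ne_top (finite_integral_one_add_norm (μ := μ) hN).ne
    (lintegral_mono fun x => ENNReal.ofReal_le_ofReal ?_)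
  refine Real.rpow_le_rpow_of_nonpos (by positivity) ?_ ?_
  · linarith [Real.add_one_le_exp (1 : ℝ)]
  · linarith [(Nat.cast_nonneg _ : (0 : ℝ) ≤ Module.finrank ℝ E)]

lemma lintegral_decayWeight_rpow_ne_top [NormedSpace ℝ E] [FiniteDimensional ℝ E]
    [MeasurableSpace E] [BorelSpace E] (μ : Measure E) [μ.IsAddHaarMeasure] {N : ℝ}
    (hN : Module.finrank ℝ E < N) {m : ℝ} (hm : 1 ≤ m) : ∫⁻ x, decayWeight N x ^ m ∂μ ≠ ⊤ := by
  refine ne_top_of_le_ne_top (lintegral_decayWeight_ne_top μ hN) (lintegral_mono fun x => ?_)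
  have hN0 : 0 ≤ N := (Nat.cast_nonneg _).trans hN.le
  simpa using ENNReal.rpow_le_rpow_of_exponent_ge (decayWeight_le_one hN0 x) hm

lemma mul_rpow_le_max {t b w : ℝ≥0∞} {p q : ℝ} (ht : t ≤ 1) (hb : b ≤ 1) (hw0 : w ≠ 0)
    (hw1 : w ≤ 1) (hp : 0 < p) (hq : 0 < q) (h : b ≤ w ^ (p⁻¹ - q⁻¹)) :
    (b * t) ^ p ≤ max (t ^ q) w := by
  set c := max (t ^ q) w
  have hc0 : c ≠ 0 := ((pos_iff_ne_zero.2 hw0).trans_le (le_max_right _ _)).ne'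
  have hc1 : c ≤ 1 := max_le (ENNReal.rpow_le_one ht hq.le) hw1
  have htc : t ≤ c ^ q⁻¹ := (ENNReal.le_rpow_inv_iff hq).2 (le_max_left _ _)
  have hbc : b ≤ c ^ (p⁻¹ - q⁻¹) := by
    rcases le_or_gt 0 (p⁻¹ - q⁻¹) with h0 | h0
    · exact h.trans (ENNReal.rpow_le_rpow (le_max_right _ _) h0)
    · exact hb.trans
        (ENNReal.one_le_rpow_of_pos_of_le_one_of_neg (pos_iff_ne_zero.2 hc0) hc1 h0)
  rw [← ENNReal.le_rpow_inv_iff hp]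
  calc b * t ≤ c ^ (p⁻¹ - q⁻¹) * c ^ q⁻¹ := mul_le_mul' hbc htc
    _ = c ^ p⁻¹ := by
        rw [← ENNReal.rpow_add _ _ hc0 (ne_top_of_le_ne_top ENNReal.one_ne_top hc1),
          sub_add_cancel]

lemma LogHolderDecay.exists_sub_le {g : E → ℝ} (hg : LogHolderDecay g) :
    ∃ D > 0, ∀ x y z : E, ‖z‖ ≤ ‖x‖ → ‖z‖ ≤ ‖y‖ →
      g x - g y ≤ D / Real.log (Real.exp 1 + ‖z‖) := by
  obtain ⟨D, hD, q, h⟩ := hg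
  refine ⟨2 * D, by positivity, fun x y z hx hy => ?_⟩
  have hLz := one_le_log_exp_one_add (norm_nonneg z)
  have hle {u : E} (hu : ‖z‖ ≤ ‖u‖) : |g u - q| ≤ D / Real.log (Real.exp 1 + ‖z‖) :=
    (h u).trans (by gcongr)
  rw [mul_div_assoc]
  linarith [(abs_le.1 (hle hx)).2, (abs_le.1 (hle hy)).1]

lemma le_decayWeight_rpow {N D d : ℝ} (hN : 0 ≤ N) {x : E}
    (hd : d ≤ D / Real.log (Real.exp 1 + ‖x‖)) :
    ENNReal.ofReal (Real.exp (-(D * N))) ≤ decayWeight N x ^ d := by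
  have hL := one_le_log_exp_one_add (norm_nonneg x)
  rw [decayWeight, ENNReal.ofReal_rpow_of_pos (by positivity), ← Real.rpow_mul (by positivity),
    Real.rpow_def_of_pos (by positivity)]
  refine ENNReal.ofReal_le_ofReal (Real.exp_le_exp.2 ?_)
  rw [le_div_iff₀ (by linarith)] at hd
  calc -(D * N) ≤ -(d * Real.log (Real.exp 1 + ‖x‖) * N) := by gcongr
    _ = _ := by ring

theorem LogHolderDecay.exists_mul_rpow_le {s : E → ℝ} (hs : LogHolderDecay fun x => (s x)⁻¹)
    (hs0 : ∀ x, 0 < s x) {N : ℝ} (hN : 0 ≤ N) :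
    ∃ κ : ℝ≥0∞, κ ≠ 0 ∧ κ ≠ ⊤ ∧ ∀ x y, ∀ t ≤ 1,
      (κ * t) ^ s x ≤ t ^ s y + (decayWeight N x + decayWeight N y) := by
  obtain ⟨D, hD, h⟩ := hs.exists_sub_le
  refine ⟨ENNReal.ofReal (Real.exp (-(D * N))), (ENNReal.ofReal_pos.2 (Real.exp_pos _)).ne',
    ENNReal.ofReal_ne_top, fun x y t ht => ?_⟩
  obtain ⟨z, hz, hzx, hzy⟩ : ∃ z, decayWeight N z ≤ decayWeight N x + decayWeight N y ∧
      ‖z‖ ≤ ‖x‖ ∧ ‖z‖ ≤ ‖y‖ := by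
    rcases le_total ‖x‖ ‖y‖ with hxy | hxy
    · exact ⟨x, le_self_add, le_rfl, hxy⟩
    · exact ⟨y, le_add_self, hxy, le_rfl⟩
  have hκ1 : ENNReal.ofReal (Real.exp (-(D * N))) ≤ 1 := by
    rw [ENNReal.ofReal_le_one, Real.exp_le_one_iff, neg_nonpos]
    positivity
  refine (mul_rpow_le_max ht hκ1 (decayWeight_ne_zero N z) (decayWeight_le_one hN z) (hs0 x)
    (hs0 y) (le_decayWeight_rpow hN (h x y z hzx hzy))).trans (max_le le_self_add ?_)
  exact hz.trans le_add_self

variable [MeasurableSpace E]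

theorem LogHolderDecay.exists_mul_maximalFunction_le {s : E → ℝ}
    (hs : LogHolderDecay fun x => (s x)⁻¹) (hsm : Measurable s) (hs1 : ∀ x, 1 ≤ s x) {N : ℝ}
    (hN : 0 ≤ N) (μ : Measure E) :
    ∃ κ : ℝ≥0∞, κ ≠ 0 ∧ κ ≠ ⊤ ∧ ∀ F : E → ℝ≥0∞, Measurable F → (∀ y, F y ≤ 1) → ∀ x,
      (κ * maximalFunction μ F x) ^ s x ≤ maximalFunction μ (fun y => F y ^ s y) x +
        (decayWeight N x + maximalFunction μ (decayWeight N) x) := by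
  obtain ⟨κ, hκ0, hκt, hκ⟩ := hs.exists_mul_rpow_le (fun x => zero_lt_one.trans_le (hs1 x)) hN
  refine ⟨κ, hκ0, hκt, fun F hF hF1 x => mul_maximalFunction_rpow_le (zero_lt_one.trans_le (hs1 x))
    fun R _ => ?_⟩
  calc (κ * ⨍⁻ y in Metric.ball x R, F y ∂μ) ^ s x
      = (⨍⁻ y in Metric.ball x R, κ * F y ∂μ) ^ s x := by
        simp_rw [setLAverage_eq, lintegral_const_mul κ hF, mul_div_assoc]
    _ ≤ ⨍⁻ y in Metric.ball x R, (κ * F y) ^ s x ∂μ :=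
        laverage_rpow_le (hF.const_mul κ).aemeasurable (hs1 x)
    _ ≤ ⨍⁻ y in Metric.ball x R, (F y ^ s y + (decayWeight N x + decayWeight N y)) ∂μ :=
        laverage_mono_ae (ae_of_all _ fun y => hκ x y (F y) (hF1 y))
    _ ≤ maximalFunction μ (fun y => F y ^ s y + (decayWeight N x + decayWeight N y)) x :=
        setLAverage_ball_le_maximalFunction _ x R
    _ ≤ _ := by
        refine (maximalFunction_add_le (hF.pow hsm) _ x).trans (add_le_add_right ?_ _)
        refine (maximalFunction_add_le measurable_const _ x).trans (add_le_add_left ?_ _)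
        exact maximalFunction_const_le _ x

end DecayEstimate

section VariableExponentMaximal

variable {Ω : Type*} [MeasurableSpace Ω] {ν : Measure Ω}

lemma lintegral_add_rpow_le {m : ℝ} (hm : 1 ≤ m) {f : Ω → ℝ≥0∞} (hf : Measurable f)
    (g : Ω → ℝ≥0∞) :
    ∫⁻ x, (f x + g x) ^ m ∂ν ≤ 2 ^ (m - 1) * (∫⁻ x, f x ^ m ∂ν + ∫⁻ x, g x ^ m ∂ν) := by
  rw [← lintegral_add_left (hf.pow_const m), ← lintegral_const_mul' _ _ (by finiteness)]
  exact lintegral_mono fun x => ENNReal.rpow_add_le_mul_rpow_add_rpow _ _ hm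

lemma lintegral_div_rpow_le_one {p : Ω → ℝ} (hp : ∀ x, 1 ≤ p x) {f : Ω → ℝ≥0∞} {K : ℝ≥0∞}
    (hK1 : 1 ≤ K) (hKt : K ≠ ⊤) (h : ∫⁻ x, f x ^ p x ∂ν ≤ K) :
    ∫⁻ x, (f x / K) ^ p x ∂ν ≤ 1 := by
  have hK0 : K ≠ 0 := (zero_lt_one.trans_le hK1).ne'
  calc ∫⁻ x, (f x / K) ^ p x ∂ν ≤ ∫⁻ x, K⁻¹ * f x ^ p x ∂ν := by
        refine lintegral_mono fun x => ?_
        rw [div_eq_mul_inv, mul_comm, ENNReal.mul_rpow_of_nonneg _ _ (by linarith [hp x])]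
        gcongr
        simpa using ENNReal.rpow_le_rpow_of_exponent_ge (ENNReal.inv_le_one.2 hK1) (hp x)
    _ ≤ K⁻¹ * K := by
        rw [lintegral_const_mul' _ _ (ENNReal.inv_ne_top.2 hK0)]
        gcongr
    _ = 1 := ENNReal.inv_mul_cancel hK0 hKt

variable {E : Type*} [NormedAddCommGroup E] [NormedSpace ℝ E] [FiniteDimensional ℝ E]
  [MeasurableSpace E] [BorelSpace E]

open Module (finrank)

-- `F` is split at height `1`: the local condition handles the large values, the decay condition
-- the small ones.
theorem exists_mul_maximalFunction_rpow_le {s : E → ℝ} (hlog : LocallyLogHolder fun x => (s x)⁻¹)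
    (hdec : LogHolderDecay fun x => (s x)⁻¹) (hsm : Measurable s) (hs1 : ∀ x, 1 ≤ s x) {N : ℝ}
    (hN : 0 ≤ N) (μ : Measure E) [μ.IsAddHaarMeasure] :
    ∃ κ : ℝ≥0∞, κ ≠ 0 ∧ κ ≠ ⊤ ∧ ∀ F : E → ℝ≥0∞, Measurable F →
      ∫⁻ y in {y | 1 < F y}, F y ^ s y ∂μ ≤ 1 → ∀ x,
        (κ * maximalFunction μ F x) ^ s x ≤ maximalFunction μ (fun y => F y ^ s y) x +
          (decayWeight N x + maximalFunction μ (decayWeight N) x) := by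
  obtain ⟨κ₁, hκ₁0, hκ₁⟩ := hlog.exists_mul_maximalFunction_le hs1 μ
  obtain ⟨κ₂, hκ₂0, hκ₂t, hκ₂⟩ := hdec.exists_mul_maximalFunction_le hsm hs1 hN μ
  have hs0 (x : E) : 0 < s x := zero_lt_one.trans_le (hs1 x)
  have hκt : min κ₁ κ₂ ≠ ⊤ := ne_top_of_le_ne_top hκ₂t (min_le_right _ _)
  refine ⟨min κ₁ κ₂ / 2, ENNReal.div_ne_zero.2 ⟨by simp [min_eq_iff, hκ₁0, hκ₂0], by simp⟩,
    ENNReal.div_ne_top hκt two_ne_zero, fun F hF hint x => ?_⟩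
  set S := {y | 1 < F y}
  have hSm : MeasurableSet S := measurableSet_lt measurable_const hF
  have hpow (T : Set E) : maximalFunction μ (fun y => T.indicator F y ^ s y) x ≤
      maximalFunction μ (fun y => F y ^ s y) x :=
    maximalFunction_mono (fun y => ENNReal.rpow_le_rpow (indicator_le_self T F y) (hs0 y).le) x
  rw [← ENNReal.le_rpow_inv_iff (hs0 x)]
  refine mul_maximalFunction_le_of_le_add (hF.indicator hSm)
    (fun y => (congrFun (indicator_self_add_compl S F) y).ge)
    ((ENNReal.le_rpow_inv_iff (hs0 x)).2 ?_) ((ENNReal.le_rpow_inv_iff (hs0 x)).2 ?_)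
  · refine (hκ₁ _ (hF.indicator hSm) (fun y => ?_) ?_ x).trans ((hpow S).trans le_self_add)
    · by_cases hy : y ∈ S
      · exact Or.inr (by simpa [hy] using (show 1 < F y from hy).le)
      · exact Or.inl (indicator_of_notMem hy F)
    · rw [← lintegral_indicator hSm] at hint
      refine (lintegral_mono fun y => ?_).trans hint
      by_cases hy : y ∈ S <;> simp [hy, hs0 y]
  · refine (hκ₂ _ (hF.indicator hSm.compl) (fun y => ?_) x).trans (add_le_add_left (hpow Sᶜ) _)
    by_cases hy : y ∈ S
    · simp [hy]
    · simpa [hy] using not_lt.1 (show ¬ 1 < F y from hy)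

variable [Nontrivial E]

lemma exists_lintegral_maximalFunction_add_rpow_le (μ : Measure E) [μ.IsAddHaarMeasure] {m : ℝ}
    (hm : 1 < m) {W : E → ℝ≥0∞} (hW : Measurable W) (hWm : ∫⁻ x, W x ^ m ∂μ ≠ ⊤) :
    ∃ K : ℝ≥0∞, K ≠ ⊤ ∧ ∀ f : E → ℝ≥0∞, Measurable f → ∫⁻ x, f x ^ m ∂μ ≤ 1 →
      ∫⁻ x, (maximalFunction μ f x + (W x + maximalFunction μ W x)) ^ m ∂μ ≤ K := by
  set C : ℝ≥0∞ := 2 ^ m * 5 ^ finrank ℝ E * ENNReal.ofReal (m / (m - 1))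
  refine ⟨2 ^ (m - 1) * (C * 1 + 2 ^ (m - 1) * (∫⁻ x, W x ^ m ∂μ + C * ∫⁻ x, W x ^ m ∂μ)),
    by finiteness, fun f hf hint => ?_⟩
  refine (lintegral_add_rpow_le hm.le (measurable_maximalFunction μ f) _).trans ?_
  gcongr
  · exact (lintegral_maximalFunction_rpow_le hm hf).trans (mul_le_mul_right hint C)
  · refine (lintegral_add_rpow_le hm.le hW _).trans ?_
    gcongr
    exact lintegral_maximalFunction_rpow_le hm hW

theorem exists_lintegral_mul_maximalFunction_rpow_le {p : E → ℝ}
    (hlog : LocallyLogHolder fun x => (p x)⁻¹) (hdec : LogHolderDecay fun x => (p x)⁻¹)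
    (hpm : Measurable p) {m : ℝ} (hm : 1 < m) (hp : ∀ x, m ≤ p x) (μ : Measure E)
    [μ.IsAddHaarMeasure] :
    ∃ κ : ℝ≥0∞, κ ≠ 0 ∧ κ ≠ ⊤ ∧ ∃ K : ℝ≥0∞, K ≠ ⊤ ∧ ∀ F : E → ℝ≥0∞, Measurable F →
      ∫⁻ x, F x ^ p x ∂μ ≤ 1 → ∫⁻ x, (κ * maximalFunction μ F x) ^ p x ∂μ ≤ K := by
  have hm0 : 0 < m := by linarith
  set N : ℝ := finrank ℝ E + 1
  have hinv : (fun x => (p x / m)⁻¹) = fun x => m * (p x)⁻¹ := by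
    ext x
    rw [inv_div, div_eq_mul_inv]
  have hpow (a : ℝ≥0∞) (x : E) : a ^ p x = (a ^ (p x / m)) ^ m := by
    rw [← ENNReal.rpow_mul, div_mul_cancel₀ _ hm0.ne']
  obtain ⟨κ, hκ0, hκt, hκ⟩ := exists_mul_maximalFunction_rpow_le (s := fun x => p x / m)
    (hinv ▸ hlog.const_mul hm0) (hinv ▸ hdec.const_mul hm0) (hpm.div_const m)
    (fun x => (one_le_div hm0).2 (hp x)) (N := N) (by positivity) μ
  obtain ⟨K, hKt, hK⟩ := exists_lintegral_maximalFunction_add_rpow_le μ hm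
    (measurable_decayWeight N) (lintegral_decayWeight_rpow_ne_top μ (lt_add_one _ : _ < N) hm.le)
  refine ⟨κ, hκ0, hκt, K, hKt, fun F hF hint => ?_⟩
  have hlarge : ∫⁻ y in {y | 1 < F y}, F y ^ (p y / m) ∂μ ≤ 1 := by
    refine (setLIntegral_mono' (measurableSet_lt measurable_const hF) fun y hy => ?_).trans
      ((setLIntegral_le_lintegral _ _).trans hint)
    exact ENNReal.rpow_le_rpow_of_exponent_le (le_of_lt hy)
      (div_le_self (by linarith [hp y]) hm.le)
  refine (lintegral_mono fun x => ?_).trans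
    (hK (fun y => F y ^ (p y / m)) (hF.pow (hpm.div_const m)) ?_)
  · rw [hpow]
    gcongr
    exact hκ F hF hlarge x
  · simpa only [← hpow] using hint

theorem exists_luxNorm_maximalFunction_le {p : E → ℝ} (hp : IsPLog univ p) {m : ℝ} (hm : 1 < m)
    (μ : Measure E) [μ.IsAddHaarMeasure] (hpm : ∀ᵐ x ∂μ, m ≤ p x) :
    ∃ C : ℝ≥0∞, C ≠ 0 ∧ C ≠ ⊤ ∧ ∀ F : E → ℝ≥0∞, Measurable F →
      luxNorm μ p (maximalFunction μ F) ≤ C * luxNorm μ p F := by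
  have hinv : (fun x => (max (p x) m)⁻¹) = fun x => min (p x)⁻¹ m⁻¹ := by
    ext x
    have hpx : 0 < p x := zero_lt_one.trans_le (hp.2.1 x trivial)
    rcases le_total (p x) m with h | h
    · rw [max_eq_right h, min_eq_right (inv_anti₀ hpx h)]
    · rw [max_eq_left h, min_eq_left (inv_anti₀ (by linarith) h)]
  obtain ⟨κ, hκ0, hκt, K, hKt, hK⟩ := exists_lintegral_mul_maximalFunction_rpow_le
    (p := fun x => max (p x) m) (hinv ▸ hp.locallyLogHolder.min_const m⁻¹)
    (hinv ▸ hp.logHolderDecay.min_const m⁻¹) (hp.1.max measurable_const) hm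
    (fun x => le_max_right _ _) μ
  have hmax (f : E → ℝ≥0∞) : ∫⁻ x, f x ^ max (p x) m ∂μ = ∫⁻ x, f x ^ p x ∂μ := by
    refine lintegral_congr_ae ?_
    filter_upwards [hpm] with x hx
    rw [max_eq_left hx]
  have hK1t : max 1 K ≠ ⊤ := by simp [hKt]
  have hK10 : max 1 K ≠ 0 := (zero_lt_one.trans_le (le_max_left _ _)).ne'
  refine ⟨max 1 K * κ⁻¹, mul_ne_zero hK10 (ENNReal.inv_ne_zero.2 hκt), by finiteness,
    fun F hF => ?_⟩
  refine luxNorm_le_const_mul (mul_ne_zero hK10 (ENNReal.inv_ne_zero.2 hκt)) (by finiteness)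
    fun c hc0 hct hFc => ?_
  have hscale (x : E) : maximalFunction μ F x / (max 1 K * κ⁻¹ * c) =
      κ * maximalFunction μ (fun y => F y / c) x / max 1 K := by
    rw [maximalFunction_div_const hF, ENNReal.div_eq_inv_mul, ENNReal.mul_inv (by simp [hct])
      (by simp [hc0.ne']), ENNReal.mul_inv (by simp [hK10]) (by simp [hK1t]), inv_inv]
    simp only [div_eq_mul_inv]
    ring
  simp only [hscale]
  rw [← hmax]
  refine lintegral_div_rpow_le_one (fun x => ?_) (le_max_left 1 K) hK1t
    ((hK _ (hF.div_const c) ?_).trans (le_max_right 1 K))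
  · exact hm.le.trans (le_max_right _ _)
  · rwa [hmax]

end VariableExponentMaximal

section RadialKernel

variable {E : Type*} [NormedAddCommGroup E]

/-- A function that is radial and nonincreasing in the norm. -/
def RadiallyAntitone (K : E → ℝ) : Prop :=
  ∀ ⦃x y⦄, ‖x‖ ≤ ‖y‖ → K y ≤ K x

variable [MeasurableSpace E]

/-- Nonnegative radially decreasing functions of mass at most one: the kernels whose convolution
with `F` is dominated by the maximal function of `F`. -/
structure IsRadialSubdensity (μ : Measure E) (K : E → ℝ) : Prop where
  nonneg : ∀ x, 0 ≤ K x
  radiallyAntitone : RadiallyAntitone K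
  lintegral_le_one : ∫⁻ x, ENNReal.ofReal (K x) ∂μ ≤ 1

variable {μ : Measure E} {K : E → ℝ}

lemma RadiallyAntitone.measurable [OpensMeasurableSpace E] (hK : RadiallyAntitone K) :
    Measurable K := by
  refine measurable_of_Ioi fun t => ?_
  have hpre : K ⁻¹' Ioi t = norm ⁻¹' {r : ℝ | ∃ w, t < K w ∧ r ≤ ‖w‖} := by
    ext z
    exact ⟨fun hz => ⟨z, hz, le_rfl⟩, fun ⟨w, hw, hzw⟩ => lt_of_lt_of_le hw (hK hzw)⟩
  have hconn : OrdConnected {r : ℝ | ∃ w, t < K w ∧ r ≤ ‖w‖} :=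
    ⟨fun _ _ _ ⟨w, hw, hbw⟩ _ hc => ⟨w, hw, hc.2.trans hbw⟩⟩
  rw [hpre]
  exact measurable_norm hconn.measurableSet

lemma IsRadialSubdensity.of_tendsto [OpensMeasurableSpace E] {L : ℕ → E → ℝ}
    (hL : ∀ k, IsRadialSubdensity μ (L k))
    (hlim : ∀ x, Filter.Tendsto (fun k => L k x) Filter.atTop (nhds (K x))) :
    IsRadialSubdensity μ K where
  nonneg x := ge_of_tendsto' (hlim x) fun k => (hL k).nonneg x
  radiallyAntitone x y hxy :=
    le_of_tendsto_of_tendsto' (hlim y) (hlim x) fun k => (hL k).radiallyAntitone hxy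
  lintegral_le_one := by
    have hofReal (x : E) : ENNReal.ofReal (K x) =
        Filter.liminf (fun k => ENNReal.ofReal (L k x)) Filter.atTop :=
      ((ENNReal.continuous_ofReal.tendsto _).comp (hlim x)).liminf_eq.symm
    simp only [hofReal]
    refine (lintegral_liminf_le fun k => (hL k).radiallyAntitone.measurable.ennreal_ofReal).trans ?_
    exact Filter.liminf_le_of_le (by isBoundedDefault) fun b hb =>
      let ⟨k, hk⟩ := hb.exists
      hk.trans (hL k).lintegral_le_one

lemma IsRadialSubdensity.sum [OpensMeasurableSpace E] {ι : Type*} (s : Finset ι) {c : ι → ℝ}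
    (hc : ∀ i, 0 ≤ c i) (hc1 : ∑ i ∈ s, c i ≤ 1) {L : ι → E → ℝ}
    (hL : ∀ i, IsRadialSubdensity μ (L i)) :
    IsRadialSubdensity μ fun x => ∑ i ∈ s, c i * L i x where
  nonneg x := Finset.sum_nonneg fun i _ => mul_nonneg (hc i) ((hL i).nonneg x)
  radiallyAntitone x y hxy := Finset.sum_le_sum fun i _ =>
    mul_le_mul_of_nonneg_left ((hL i).radiallyAntitone hxy) (hc i)
  lintegral_le_one := by
    have hm (i : ι) := (hL i).radiallyAntitone.measurable.ennreal_ofReal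
    calc ∫⁻ x, ENNReal.ofReal (∑ i ∈ s, c i * L i x) ∂μ
        = ∑ i ∈ s, ENNReal.ofReal (c i) * ∫⁻ x, ENNReal.ofReal (L i x) ∂μ := by
          simp_rw [← lintegral_const_mul _ (hm _),
            ← lintegral_finsetSum s fun i _ => (hm i).const_mul _,
            ENNReal.ofReal_sum_of_nonneg fun i _ => mul_nonneg (hc i) ((hL i).nonneg _),
            ENNReal.ofReal_mul (hc _)]
      _ ≤ ∑ i ∈ s, ENNReal.ofReal (c i) * 1 := by
          gcongr with i
          exact (hL i).lintegral_le_one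
      _ ≤ 1 := by
          simpa only [mul_one, ← ENNReal.ofReal_sum_of_nonneg fun i _ => hc i]
            using ENNReal.ofReal_le_one.2 hc1

variable [NormedSpace ℝ E] [FiniteDimensional ℝ E] [BorelSpace E] [μ.IsAddHaarMeasure]
  [Nontrivial E]

lemma eq_univ_or_exists_ae_eq_ball {A : Set E} {x : E}
    (hA : ∀ ⦃z w⦄, dist z x ≤ dist w x → w ∈ A → z ∈ A) :
    A = univ ∨ ∃ R, A =ᵐ[μ] Metric.ball x R := by
  by_cases hbdd : BddAbove ((dist · x) '' A)
  · right
    rcases A.eq_empty_or_nonempty with rfl | hne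
    · exact ⟨0, by simp⟩
    refine ⟨sSup ((dist · x) '' A), Filter.EventuallyLE.antisymm ?_ ?_⟩
    · have hsub : A ⊆ Metric.closedBall x (sSup ((dist · x) '' A)) := fun z hz =>
        le_csSup hbdd (mem_image_of_mem _ hz)
      refine hsub.eventuallyLE.trans (ae_le_set.2 ?_)
      rw [Metric.closedBall_sdiff_ball, Measure.addHaar_sphere]
    · refine LE.le.eventuallyLE fun z hz => ?_
      obtain ⟨-, ⟨w, hw, rfl⟩, hzw⟩ := exists_lt_of_lt_csSup (hne.image _) (Metric.mem_ball.1 hz)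
      exact hA hzw.le hw
  · left
    refine eq_univ_of_forall fun z => ?_
    obtain ⟨-, ⟨w, hw, rfl⟩, hzw⟩ := not_bddAbove_iff.1 hbdd (dist z x)
    exact hA hzw.le hw

lemma setLIntegral_le_maximalFunction_mul {A : Set E} {x : E}
    (hA : ∀ ⦃z w⦄, dist z x ≤ dist w x → w ∈ A → z ∈ A) (F : E → ℝ≥0∞) :
    ∫⁻ y in A, F y ∂μ ≤ maximalFunction μ F x * μ A := by
  rcases eq_univ_or_exists_ae_eq_ball (μ := μ) hA with rfl | ⟨R, hR⟩
  · rw [← Metric.iUnion_ball_nat x, setLIntegral_iUnion_of_directed F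
      (Monotone.directed_le fun i j hij => Metric.ball_subset_ball (Nat.cast_le.2 hij))]
    refine iSup_le fun k => (setLIntegral_ball_le_maximalFunction_mul F x k).trans ?_
    exact mul_le_mul_right (measure_mono (subset_iUnion (fun k : ℕ => Metric.ball x k) k)) _
  · rw [setLIntegral_congr hR, measure_congr hR]
    exact setLIntegral_ball_le_maximalFunction_mul F x R

theorem IsRadialSubdensity.lintegral_mul_le_maximalFunction (hK : IsRadialSubdensity μ K)
    {F : E → ℝ≥0∞} (hF : Measurable F) (x : E) :
    ∫⁻ y, ENNReal.ofReal (K (x - y)) * F y ∂μ ≤ maximalFunction μ F x := by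
  have hKx : Measurable fun y => K (x - y) :=
    hK.radiallyAntitone.measurable.comp (measurable_const.sub measurable_id)
  have hnonneg (y : E) : 0 ≤ K (x - y) := hK.nonneg _
  have hlevel (t : ℝ) : (μ.withDensity F) {y | t < K (x - y)} ≤
      maximalFunction μ F x * μ {y | t < K (x - y)} := by
    rw [withDensity_apply _ (measurableSet_lt measurable_const hKx)]
    refine setLIntegral_le_maximalFunction_mul (fun z w hzw (hw : t < K (x - w)) =>
      hw.trans_le (hK.radiallyAntitone ?_)) F
    rwa [← dist_eq_norm, ← dist_eq_norm, dist_comm x, dist_comm x]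
  calc ∫⁻ y, ENNReal.ofReal (K (x - y)) * F y ∂μ
      = ∫⁻ y, ENNReal.ofReal (K (x - y)) ∂(μ.withDensity F) := by
        rw [lintegral_withDensity_eq_lintegral_mul _ hF hKx.ennreal_ofReal]
        simp only [Pi.mul_apply, mul_comm]
    _ = ∫⁻ t in Ioi 0, (μ.withDensity F) {y | t < K (x - y)} :=
        lintegral_eq_lintegral_meas_lt _ (ae_of_all _ hnonneg) hKx.aemeasurable
    _ ≤ ∫⁻ t in Ioi 0, maximalFunction μ F x * μ {y | t < K (x - y)} := lintegral_mono hlevel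
    _ = maximalFunction μ F x * ∫⁻ y, ENNReal.ofReal (K y) ∂μ := by
        have hanti : Antitone fun t => μ {y | t < K (x - y)} := fun s t hst =>
          measure_mono fun y (hy : t < K (x - y)) => hst.trans_lt hy
        rw [lintegral_const_mul _ hanti.measurable,
          ← lintegral_eq_lintegral_meas_lt _ (ae_of_all _ hnonneg) hKx.aemeasurable,
          lintegral_sub_left_eq_self fun y => ENNReal.ofReal (K y)]
    _ ≤ maximalFunction μ F x := mul_le_of_le_one_right' hK.lintegral_le_one

end RadialKernel

section BinomialSeries

lemma choose_succ_mul_succ (a : ℝ) (k : ℕ) :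
    Ring.choose a (k + 1) * (k + 1) = Ring.choose a k * (a - k) := by
  have hk := Ring.descPochhammer_eq_factorial_smul_choose a k
  have hsucc := Ring.descPochhammer_eq_factorial_smul_choose a (k + 1)
  rw [descPochhammer_succ_right, Polynomial.smeval_mul, hk] at hsucc
  simp only [Polynomial.smeval_sub, Polynomial.smeval_X, Polynomial.smeval_natCast, pow_zero,
    pow_one, nsmul_eq_mul, mul_one, Nat.factorial_succ, Nat.cast_mul, Nat.cast_add,
    Nat.cast_one] at hsucc
  refine mul_left_cancel₀ (Nat.cast_ne_zero.2 k.factorial_ne_zero : (k.factorial : ℝ) ≠ 0) ?_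
  linear_combination -hsucc

lemma neg_one_pow_mul_choose_succ_nonneg {α : ℝ} (hα : 0 ≤ α) (hα1 : α ≤ 1) (k : ℕ) :
    0 ≤ (-1) ^ k * Ring.choose α (k + 1) := by
  induction k with
  | zero => simpa using hα
  | succ k ih =>
    have hrec : (-1) ^ (k + 1) * Ring.choose α (k + 1 + 1) =
        (-1) ^ k * Ring.choose α (k + 1) * ((k + 1 - α) / (k + 2)) := by
      have hchoose := choose_succ_mul_succ α (k + 1)
      push_cast at hchoose
      field_simp
      rw [pow_succ]
      linear_combination -(-1) ^ k * hchoose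
    rw [hrec]
    exact mul_nonneg ih (div_nonneg (by linarith [k.cast_nonneg (α := ℝ)]) (by positivity))

lemma hasSum_one_sub_one_sub_rpow (α : ℝ) {x : ℝ} (hx : |x| < 1) :
    HasSum (fun k : ℕ => (-1) ^ k * Ring.choose α (k + 1) * x ^ (k + 1)) (1 - (1 - x) ^ α) := by
  have h := (Real.one_add_rpow_hasFPowerSeriesOnBall_zero (a := α)).hasSum (y := -x) (by
    rw [← ENNReal.ofReal_one, Metric.eball_ofReal]
    simpa using hx)
  simp only [binomialSeries_apply, List.ofFn_const, List.prod_replicate, smul_eq_mul,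
    zero_add] at h
  rw [← sub_eq_add_neg] at h
  have htail := ((hasSum_nat_add_iff' 1).2 h).neg
  simp only [Finset.range_one, Finset.sum_singleton, pow_zero, Ring.choose_zero_right, mul_one,
    neg_sub] at htail
  refine htail.congr_fun fun k => ?_
  rw [neg_pow x, pow_succ (-1 : ℝ)]
  ring

lemma sum_neg_one_pow_mul_choose_succ_le_one {α : ℝ} (hα : 0 ≤ α) (hα1 : α ≤ 1) (K : ℕ) :
    ∑ k ∈ Finset.range K, (-1) ^ k * Ring.choose α (k + 1) ≤ 1 := by
  have hpartial : ∀ x ∈ Ico (0 : ℝ) 1,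
      ∑ k ∈ Finset.range K, (-1) ^ k * Ring.choose α (k + 1) * x ^ (k + 1) ≤ 1 := fun x hx =>
    calc _ ≤ 1 - (1 - x) ^ α :=
          sum_le_hasSum _ (fun k _ => mul_nonneg (neg_one_pow_mul_choose_succ_nonneg hα hα1 k)
            (pow_nonneg hx.1 _))
            (hasSum_one_sub_one_sub_rpow α ((abs_of_nonneg hx.1).trans_lt hx.2))
      _ ≤ 1 := sub_le_self _ (Real.rpow_nonneg (sub_nonneg.2 hx.2.le) _)
  have hcont : Continuous fun x : ℝ =>
      ∑ k ∈ Finset.range K, (-1) ^ k * Ring.choose α (k + 1) * x ^ (k + 1) := by fun_prop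
  have hlim := (hcont.tendsto 1).mono_left (nhdsWithin_le_nhds (s := Iio 1))
  simp only [one_pow, mul_one] at hlim
  refine le_of_tendsto hlim ?_
  filter_upwards [Ico_mem_nhdsLT zero_lt_one] with x hx using hpartial x hx

end BinomialSeries

section LaplaceMixture

/-- Laplace transforms of subprobability measures on `[0, ∞)`, encoded as the smallest class of
functions that contains the exponentials and is closed under finite subconvex combinations and under
pointwise limits on `(0, ∞)`. -/
inductive IsLaplaceMixture : (ℝ → ℝ) → Prop
  | exp_neg {s : ℝ} (hs : 0 ≤ s) : IsLaplaceMixture fun l => Real.exp (-(s * l))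
  | sum {K : ℕ} {c : ℕ → ℝ} (hc : ∀ k, 0 ≤ c k) (hc1 : ∑ k ∈ Finset.range K, c k ≤ 1)
      {f : ℕ → ℝ → ℝ} (hf : ∀ k, IsLaplaceMixture (f k)) :
      IsLaplaceMixture fun l => ∑ k ∈ Finset.range K, c k * f k l
  | of_tendsto {f : ℕ → ℝ → ℝ} {g : ℝ → ℝ} (hf : ∀ k, IsLaplaceMixture (f k))
      (hlim : ∀ l, 0 < l → Filter.Tendsto (fun k => f k l) Filter.atTop (nhds (g l))) :
      IsLaplaceMixture g

namespace IsLaplaceMixture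

variable {f g : ℝ → ℝ}

lemma mem_Icc (hf : IsLaplaceMixture f) {l : ℝ} (hl : 0 < l) : f l ∈ Icc (0 : ℝ) 1 := by
  induction hf with
  | exp_neg hs =>
    exact ⟨(Real.exp_pos _).le, Real.exp_le_one_iff.2 (neg_nonpos.2 (mul_nonneg hs hl.le))⟩
  | sum hc hc1 _ ih =>
    refine ⟨Finset.sum_nonneg fun k _ => mul_nonneg (hc k) (ih k).1, hc1.trans' ?_⟩
    exact Finset.sum_le_sum fun k _ => mul_le_of_le_one_right (hc k) (ih k).2
  | of_tendsto _ hlim ih => exact isClosed_Icc.mem_of_tendsto (hlim l hl) (.of_forall ih)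

lemma mul (hf : IsLaplaceMixture f) (hg : IsLaplaceMixture g) :
    IsLaplaceMixture fun l => f l * g l := by
  induction hf with
  | @exp_neg s hs =>
    induction hg with
    | @exp_neg t ht =>
      simpa only [← Real.exp_add, ← neg_add, ← add_mul] using exp_neg (add_nonneg hs ht)
    | sum hc hc1 _ ih => simpa only [Finset.mul_sum, mul_left_comm] using sum hc hc1 ih
    | of_tendsto _ hlim ih => exact of_tendsto ih fun l hl => (hlim l hl).const_mul _
  | sum hc hc1 _ ih => simpa only [Finset.sum_mul, mul_assoc] using sum hc hc1 ih
  | of_tendsto _ hlim ih => exact of_tendsto ih fun l hl => (hlim l hl).mul_const _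

lemma one : IsLaplaceMixture fun _ => 1 := by
  simpa only [zero_mul, neg_zero, Real.exp_zero] using exp_neg le_rfl

lemma pow (hf : IsLaplaceMixture f) (k : ℕ) : IsLaplaceMixture fun l => f l ^ k := by
  induction k with
  | zero => simpa only [pow_zero] using one
  | succ k ih => simpa only [pow_succ] using ih.mul hf

lemma convexCombination (hf : IsLaplaceMixture f) (hg : IsLaplaceMixture g) {a : ℝ}
    (ha : a ∈ Icc (0 : ℝ) 1) : IsLaplaceMixture fun l => (1 - a) * f l + a * g l := by
  have h := sum (K := 2) (c := fun k => if k = 0 then 1 - a else a)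
    (f := fun k => if k = 0 then f else g)
    (fun k => by split_ifs; exacts [sub_nonneg.2 ha.2, ha.1])
    (by simp [Finset.sum_range_succ])
    (fun k => by split_ifs; exacts [hf, hg])
  simpa [Finset.sum_range_succ] using h

lemma exp_mul_sub_one (hf : IsLaplaceMixture f) {T : ℝ} (hT : 0 ≤ T) :
    IsLaplaceMixture fun l => Real.exp (T * (f l - 1)) := by
  set N : ℕ → ℕ := fun k => k + (⌈T⌉₊ + 1)
  have hNT (k : ℕ) : T / N k ∈ Icc (0 : ℝ) 1 := by
    refine ⟨by positivity, div_le_one_of_le₀ ((Nat.le_ceil T).trans ?_) (Nat.cast_nonneg _)⟩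
    exact Nat.cast_le.2 (by lia)
  refine of_tendsto (fun k => (one.convexCombination hf (hNT k)).pow (N k)) fun l _ => ?_
  have hlim : Filter.Tendsto (fun k : ℕ => (1 + T * (f l - 1) / k) ^ k) Filter.atTop
      (nhds (Real.exp (T * (f l - 1)))) := Real.tendsto_one_add_div_pow_exp _
  refine (hlim.comp (Filter.tendsto_add_atTop_nat (⌈T⌉₊ + 1))).congr fun k => ?_
  simp only [Function.comp_apply, N]
  ring

end IsLaplaceMixture

lemma isLaplaceMixture_one_sub_one_sub_exp_rpow {α s : ℝ} (hα : 0 ≤ α) (hα1 : α ≤ 1)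
    (hs : 0 < s) : IsLaplaceMixture fun l => 1 - (1 - Real.exp (-(s * l))) ^ α := by
  refine .of_tendsto (fun K => .sum (K := K) (neg_one_pow_mul_choose_succ_nonneg hα hα1)
    (sum_neg_one_pow_mul_choose_succ_le_one hα hα1 K)
    fun k => (IsLaplaceMixture.exp_neg hs.le).pow (k + 1)) fun l hl => ?_
  refine (hasSum_one_sub_one_sub_rpow α ?_).tendsto_sum_nat
  rw [Real.abs_exp]
  exact Real.exp_lt_one_iff.2 (neg_lt_zero.2 (mul_pos hs hl))

lemma tendsto_mul_one_sub_exp_neg_inv_mul (y : ℝ) :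
    Filter.Tendsto (fun N : ℕ => ((N : ℝ) + 1) * (1 - Real.exp (-(((N : ℝ) + 1)⁻¹ * y))))
      Filter.atTop (nhds y) := by
  have hderiv : HasDerivAt (fun u : ℝ => -Real.exp (-u)) 1 0 := by
    simpa using (hasDerivAt_neg (0 : ℝ)).exp.fun_neg
  have hlim := (hderiv.hasFDerivAt.lim_real y).comp
    (Filter.tendsto_atTop_add_const_right _ (1 : ℝ) tendsto_natCast_atTop_atTop)
  simpa [Function.comp_def, neg_add_eq_sub] using hlim

theorem isLaplaceMixture_exp_neg_mul_rpow {α t : ℝ} (hα : 0 ≤ α) (hα1 : α ≤ 1) (ht : 0 ≤ t) :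
    IsLaplaceMixture fun l => Real.exp (-(t * l ^ α)) := by
  have happrox (N : ℕ) : IsLaplaceMixture fun l => Real.exp
      (t * (N + 1 : ℝ) ^ α * (1 - (1 - Real.exp (-((N + 1 : ℝ)⁻¹ * l))) ^ α - 1)) :=
    (isLaplaceMixture_one_sub_one_sub_exp_rpow hα hα1 (by positivity)).exp_mul_sub_one
      (by positivity)
  refine .of_tendsto happrox fun l hl => ?_
  have hlim := (((tendsto_mul_one_sub_exp_neg_inv_mul l).rpow_const (p := α) (.inr hα)).const_mul
    t).neg.rexp
  refine hlim.congr fun N => ?_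
  have hexp : 0 ≤ 1 - Real.exp (-((N + 1 : ℝ)⁻¹ * l)) :=
    sub_nonneg.2 (Real.exp_le_one_iff.2 (neg_nonpos.2 (by positivity)))
  rw [Real.mul_rpow (by positivity) hexp]
  ring_nf

end LaplaceMixture

section MultiplierKernel

variable {V : Type*} [NormedAddCommGroup V] [InnerProductSpace ℝ V] [FiniteDimensional ℝ V]
  [MeasurableSpace V] [BorelSpace V]

/-- The convolution kernel of the Fourier multiplier `m`: the real part of its inverse Fourier
transform, which is the whole of it when `m` is even. -/
def multiplierKernel (m : V → ℝ) (z : V) : ℝ :=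
  (𝓕⁻ (fun ξ => (m ξ : ℂ)) z).re

lemma multiplierKernel_eq_integral_cos {m : V → ℝ} (hm : Integrable m) (z : V) :
    multiplierKernel m z = ∫ ξ, Real.cos (2 * Real.pi * inner ℝ ξ z) * m ξ := by
  have hint : Integrable fun ξ : V =>
      Complex.exp ((↑(2 * Real.pi * inner ℝ ξ z) : ℂ) * Complex.I) • (m ξ : ℂ) :=
    (hm.ofReal (𝕜 := ℂ)).bdd_mul (c := 1) (Continuous.aestronglyMeasurable (by fun_prop))
      (ae_of_all _ fun ξ => (Complex.norm_exp_ofReal_mul_I _).le)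
  rw [multiplierKernel, Real.fourierInv_eq', ← Complex.reCLM_apply,
    ← Complex.reCLM.integral_comp_comm hint]
  simp only [Complex.reCLM_apply, smul_eq_mul, Complex.re_mul_ofReal, Complex.exp_ofReal_mul_I_re]

lemma multiplierKernel_sum {ι : Type*} (s : Finset ι) (c : ι → ℝ) {m : ι → V → ℝ}
    (hm : ∀ i, Integrable (m i)) :
    multiplierKernel (fun ξ => ∑ i ∈ s, c i * m i ξ) =
      fun z => ∑ i ∈ s, c i * multiplierKernel (m i) z := by
  ext z
  rw [multiplierKernel_eq_integral_cos (integrable_finsetSum _ fun i _ => (hm i).const_mul _)]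
  simp_rw [multiplierKernel_eq_integral_cos (hm _), Finset.mul_sum, mul_left_comm _ (c _)]
  rw [integral_finsetSum]
  · simp only [integral_const_mul]
  · exact fun i _ => ((hm i).bdd_mul (c := 1) (Continuous.aestronglyMeasurable (by fun_prop))
      (ae_of_all _ fun ξ => Real.abs_cos_le_one _)).const_mul _

lemma tendsto_multiplierKernel {m : ℕ → V → ℝ} {g m' : V → ℝ} (hm : ∀ k, Integrable (m k))
    (hm' : Integrable m') (hg : Integrable g) (hbound : ∀ k, ∀ᵐ ξ, |m k ξ| ≤ g ξ)
    (hlim : ∀ᵐ ξ, Filter.Tendsto (fun k => m k ξ) Filter.atTop (nhds (m' ξ))) (z : V) :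
    Filter.Tendsto (fun k => multiplierKernel (m k) z) Filter.atTop
      (nhds (multiplierKernel m' z)) := by
  simp_rw [multiplierKernel_eq_integral_cos hm', multiplierKernel_eq_integral_cos (hm _)]
  refine tendsto_integral_of_dominated_convergence g (fun k => ?_) hg (fun k => ?_) ?_
  · exact (Continuous.aestronglyMeasurable (by fun_prop)).mul (hm k).aestronglyMeasurable
  · filter_upwards [hbound k] with ξ hξ
    rw [Real.norm_eq_abs, abs_mul]
    exact (mul_le_of_le_one_left (abs_nonneg _) (Real.abs_cos_le_one _)).trans hξ
  · filter_upwards [hlim] with ξ hξ using hξ.const_mul _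

lemma multiplierKernel_exp_neg_mul_norm_sq {s : ℝ} (hs : 0 < s) (z : V) :
    multiplierKernel (fun ξ : V => Real.exp (-s * ‖ξ‖ ^ 2)) z =
      (Real.pi / s) ^ ((Module.finrank ℝ V : ℝ) / 2) *
        Real.exp (-(Real.pi ^ 2 / s) * ‖z‖ ^ 2) := by
  have hfourier := fourier_gaussian_innerProductSpace (V := V) (b := s) (by simpa using hs) (-z)
  rw [multiplierKernel, Real.fourierInv_eq_fourier_neg, ← Complex.ofReal_re
    ((Real.pi / s) ^ ((Module.finrank ℝ V : ℝ) / 2) * Real.exp (-(Real.pi ^ 2 / s) * ‖z‖ ^ 2))]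
  congr 1
  convert hfourier using 2
  · push_cast; rfl
  · rw [norm_neg, Complex.ofReal_mul, Complex.ofReal_cpow (by positivity)]
    push_cast
    congr 2
    ring

lemma integrable_exp_neg_mul_norm_sq {s : ℝ} (hs : 0 < s) :
    Integrable fun ξ : V => Real.exp (-s * ‖ξ‖ ^ 2) := by
  refine Integrable.of_integral_ne_zero ?_
  rw [GaussianFourier.integral_rexp_neg_mul_sq_norm hs]
  positivity

lemma isRadialSubdensity_multiplierKernel_exp_neg_mul_norm_sq {s : ℝ} (hs : 0 < s) :
    IsRadialSubdensity volume (multiplierKernel fun ξ : V => Real.exp (-s * ‖ξ‖ ^ 2)) where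
  nonneg z := by
    rw [multiplierKernel_exp_neg_mul_norm_sq hs]
    positivity
  radiallyAntitone x y hxy := by
    simp only [multiplierKernel_exp_neg_mul_norm_sq hs]
    rw [neg_mul, neg_mul]
    gcongr
  lintegral_le_one := by
    have hb : 0 < Real.pi ^ 2 / s := by positivity
    have hmass : Real.pi / s * (Real.pi / (Real.pi ^ 2 / s)) = 1 := by field_simp
    simp only [multiplierKernel_exp_neg_mul_norm_sq hs]
    rw [← ofReal_integral_eq_lintegral_ofReal ((integrable_exp_neg_mul_norm_sq hb).const_mul _)
      (ae_of_all _ fun y => by positivity), integral_const_mul,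
      GaussianFourier.integral_rexp_neg_mul_sq_norm hb,
      ← Real.mul_rpow (by positivity) (by positivity), hmass, Real.one_rpow, ENNReal.ofReal_one]

variable [Nontrivial V]

lemma ae_norm_sq_pos : ∀ᵐ ξ : V, 0 < ‖ξ‖ ^ 2 := by
  filter_upwards [Measure.ae_ne volume (0 : V)] with ξ hξ
  exact pow_pos (norm_pos_iff.2 hξ) 2

namespace IsLaplaceMixture

variable {f : ℝ → ℝ}

lemma abs_gaussian_mul_le (hf : IsLaplaceMixture f) (ε : ℝ) : ∀ᵐ ξ : V,
    |Real.exp (-ε * ‖ξ‖ ^ 2) * f (‖ξ‖ ^ 2)| ≤ Real.exp (-ε * ‖ξ‖ ^ 2) := by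
  filter_upwards [ae_norm_sq_pos] with ξ hξ
  obtain ⟨h0, h1⟩ := hf.mem_Icc hξ
  rw [abs_of_nonneg (mul_nonneg (Real.exp_pos _).le h0)]
  exact mul_le_of_le_one_right (Real.exp_pos _).le h1

lemma isRadialSubdensity_multiplierKernel_gaussian_mul (hf : IsLaplaceMixture f) {ε : ℝ}
    (hε : 0 < ε) : Integrable (fun ξ : V => Real.exp (-ε * ‖ξ‖ ^ 2) * f (‖ξ‖ ^ 2)) ∧
      IsRadialSubdensity volume
        (multiplierKernel fun ξ : V => Real.exp (-ε * ‖ξ‖ ^ 2) * f (‖ξ‖ ^ 2)) := by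
  induction hf with
  | @exp_neg s hs =>
    simp_rw [← Real.exp_add, ← neg_mul, ← add_mul, ← neg_add]
    exact ⟨integrable_exp_neg_mul_norm_sq (by positivity),
      isRadialSubdensity_multiplierKernel_exp_neg_mul_norm_sq (by positivity)⟩
  | sum hc hc1 _ ih =>
    simp_rw [Finset.mul_sum, mul_left_comm (Real.exp _)]
    refine ⟨integrable_finsetSum _ fun k _ => (ih k).1.const_mul _, ?_⟩
    rw [multiplierKernel_sum _ _ fun k => (ih k).1]
    exact .sum _ hc hc1 fun k => (ih k).2
  | @of_tendsto f g hf hlim ih =>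
    have hbound (k : ℕ) := (hf k).abs_gaussian_mul_le (V := V) ε
    have hlim' : ∀ᵐ ξ : V, Filter.Tendsto (fun k => Real.exp (-ε * ‖ξ‖ ^ 2) * f k (‖ξ‖ ^ 2))
        Filter.atTop (nhds (Real.exp (-ε * ‖ξ‖ ^ 2) * g (‖ξ‖ ^ 2))) := by
      filter_upwards [ae_norm_sq_pos] with ξ hξ using (hlim _ hξ).const_mul _
    have hgauss := integrable_exp_neg_mul_norm_sq (V := V) hε
    have hint : Integrable fun ξ : V => Real.exp (-ε * ‖ξ‖ ^ 2) * g (‖ξ‖ ^ 2) :=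
      hgauss.mono' (aestronglyMeasurable_of_tendsto_ae Filter.atTop
        (fun k => (ih k).1.aestronglyMeasurable) hlim')
        ((IsLaplaceMixture.of_tendsto hf hlim).abs_gaussian_mul_le ε)
    exact ⟨hint, .of_tendsto (fun k => (ih k).2) fun z =>
      tendsto_multiplierKernel (fun k => (ih k).1) hint hgauss hbound hlim' z⟩

theorem isRadialSubdensity_multiplierKernel (hf : IsLaplaceMixture f)
    (hint : Integrable fun ξ : V => f (‖ξ‖ ^ 2)) :
    IsRadialSubdensity volume (multiplierKernel fun ξ : V => f (‖ξ‖ ^ 2)) := by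
  have happrox (j : ℕ) := hf.isRadialSubdensity_multiplierKernel_gaussian_mul (V := V)
    (ε := 1 / ((j : ℝ) + 1)) (by positivity)
  refine .of_tendsto (fun j => (happrox j).2) fun z =>
    tendsto_multiplierKernel (fun j => (happrox j).1) hint hint.abs (fun j => ?_) ?_ z
  · refine ae_of_all _ fun ξ => ?_
    rw [abs_mul, Real.abs_exp]
    refine mul_le_of_le_one_left (abs_nonneg _) (Real.exp_le_one_iff.2 ?_)
    rw [neg_mul]
    exact neg_nonpos.2 (by positivity)
  · refine ae_of_all _ fun ξ => ?_
    simpa using ((tendsto_one_div_add_atTop_nhds_zero_nat (𝕜 := ℝ)).neg.mul_const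
      (‖ξ‖ ^ 2)).rexp.mul_const (f (‖ξ‖ ^ 2))

end IsLaplaceMixture

lemma integrable_exp_neg_mul_norm_rpow {t q : ℝ} (ht : 0 < t) (hq : 0 < q) :
    Integrable fun ξ : V => Real.exp (-t * ‖ξ‖ ^ q) := by
  refine (integrable_fun_norm_addHaar volume (f := fun y : ℝ => Real.exp (-t * y ^ q))).2 ?_
  have hdim : (-1 : ℝ) < (Module.finrank ℝ V - 1 : ℕ) :=
    neg_one_lt_zero.trans_le (Nat.cast_nonneg _)
  simpa only [Real.rpow_natCast, smul_eq_mul] using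
    integrableOn_rpow_mul_exp_neg_mul_rpow hdim hq ht

theorem isRadialSubdensity_multiplierKernel_exp_neg_mul_norm_rpow {α t : ℝ} (hα : 0 < α)
    (hα1 : α ≤ 1) (ht : 0 < t) : IsRadialSubdensity volume
      (multiplierKernel fun ξ : V => Real.exp (-t * ‖ξ‖ ^ (2 * α))) := by
  have hpow (ξ : V) : (‖ξ‖ ^ 2) ^ α = ‖ξ‖ ^ (2 * α) := by
    rw [Real.rpow_mul (norm_nonneg _), Real.rpow_two]
  have hint := integrable_exp_neg_mul_norm_rpow (V := V) ht (mul_pos two_pos hα)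
  simp_rw [← hpow, neg_mul] at hint ⊢
  exact (isLaplaceMixture_exp_neg_mul_rpow hα.le hα1 ht.le).isRadialSubdensity_multiplierKernel hint

end MultiplierKernel

section HeatSemigroup

variable {n : ℕ} {α : ℝ}

lemma timeSup_conv_gKer_le_maximalFunction (hn : 1 ≤ n) (hα : 0 < α) (hα1 : α ≤ 1)
    {u : Rn n → ℝ} (hu : Measurable u) (x : Rn n) :
    timeSup n (fun t x => conv n (gKer n α t) u x) x ≤
      maximalFunction volume (fun y => ENNReal.ofReal |u y|) x := by
  have : Nonempty (Fin n) := ⟨⟨0, hn⟩⟩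
  refine essSup_le_of_ae_le _ ?_
  filter_upwards [ae_restrict_mem measurableSet_Ioi] with t ht
  have hK : IsRadialSubdensity volume (gKer n α t) :=
    isRadialSubdensity_multiplierKernel_exp_neg_mul_norm_rpow hα hα1 ht
  calc ENNReal.ofReal |conv n (gKer n α t) u x|
      ≤ ∫⁻ y, ENNReal.ofReal |gKer n α t (x - y) * u y| := by
        simpa only [conv, Real.enorm_eq_ofReal_abs] using
          enorm_integral_le_lintegral_enorm fun y => gKer n α t (x - y) * u y
    _ = ∫⁻ y, ENNReal.ofReal (gKer n α t (x - y)) * ENNReal.ofReal |u y| := by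
        simp only [abs_mul, abs_of_nonneg (hK.nonneg _), ENNReal.ofReal_mul (hK.nonneg _)]
    _ ≤ maximalFunction volume (fun y => ENNReal.ofReal |u y|) x :=
        hK.lintegral_mul_le_maximalFunction hu.abs.ennreal_ofReal x

lemma exists_luxNorm_timeSup_conv_gKer_le (hn : 1 ≤ n) (hα : 0 < α) (hα1 : α ≤ 1)
    {p : Rn n → ℝ} (hp : IsPLog univ p) {m : ℝ} (hm : 1 < m) (hpm : ∀ᵐ x, m ≤ p x) :
    ∃ C : ℝ≥0∞, C ≠ 0 ∧ C ≠ ⊤ ∧ ∀ u : Rn n → ℝ, Measurable u →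
      luxNorm volume p (timeSup n fun t x => conv n (gKer n α t) u x) ≤
        C * luxNormR volume p u := by
  have : Nonempty (Fin n) := ⟨⟨0, hn⟩⟩
  obtain ⟨C, hC0, hC, hmax⟩ := exists_luxNorm_maximalFunction_le hp hm volume hpm
  refine ⟨C, hC0, hC, fun u hu => (luxNorm_mono ?_
    (timeSup_conv_gKer_le_maximalFunction hn hα hα1 hu)).trans (hmax _ hu.abs.ennreal_ofReal)⟩
  exact ae_of_all _ fun x => zero_le_one.trans (hp.2.1 x (mem_univ x))

theorem stmt4_general (n : ℕ) (hn : 1 ≤ n) (α : ℝ) (hα : 0 < α ∧ α ≤ 1) (r : ℝ) (hr : 1 < r)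
    (p : Rn n → ℝ) (hplog : IsPLog univ p)
    (hpminus : ∃ pm : ℝ, 1 < pm ∧ ∀ᵐ x ∂(volume : Measure (Rn n)), pm ≤ p x) :
    ∃ C > (0:ℝ), ∀ u₀ : Rn n → ℝ, Measurable u₀ →
      mixedN n p r (fun t x => conv n (gKer n α t) u₀ x)
        ≤ ENNReal.ofReal C * mixedNorm n p r u₀ := by
  obtain ⟨pm, hpm, hppm⟩ := hpminus
  obtain ⟨C₁, hC₁0, hC₁, hp⟩ := exists_luxNorm_timeSup_conv_gKer_le hn hα.1 hα.2 hplog hpm hppm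
  obtain ⟨C₂, -, hC₂, hconst⟩ := exists_luxNorm_timeSup_conv_gKer_le hn hα.1 hα.2
    (isPLog_const univ hr.le) hr (ae_of_all _ fun _ => le_rfl)
  have hC0 : max C₁ C₂ ≠ 0 := ((pos_iff_ne_zero.2 hC₁0).trans_le (le_max_left _ _)).ne'
  have hC : max C₁ C₂ ≠ ⊤ := (max_lt hC₁.lt_top hC₂.lt_top).ne
  refine ⟨(max C₁ C₂).toReal, ENNReal.toReal_pos hC0 hC, fun u₀ hu₀ => ?_⟩
  rw [ENNReal.ofReal_toReal hC]
  exact max_le ((hp u₀ hu₀).trans (mul_le_mul' (le_max_left _ _) (le_max_left _ _)))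
    ((hconst u₀ hu₀).trans (mul_le_mul' (le_max_right _ _) (le_max_right _ _)))

end HeatSemigroup

/-- Control of the heat semigroup on the initial data in mixed variable Lebesgue spaces:
`N_{p(·),r}((t,x) ↦ (𝔤_t^α ∗ u₀)(x)) ≤ C ‖u₀‖_{𝓛^{p(·)}_r}` with `r = nb/(2α − γ)`. -/
theorem stmt4 (γ n b : ℕ) (hγ : γ = 0 ∨ γ = 1) (hn : 1 ≤ n) (hb : 1 ≤ b)
    (α : ℝ) (hα : 1/2 < α ∧ α ≤ 1) (r : ℝ) (hr : r = (n:ℝ) * b / (2 * α - γ)) (hr1 : 1 < r)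
    (p : Rn n → ℝ) (hplog : IsPLog univ p)
    (hpminus : ∃ pm : ℝ, 1 < pm ∧ ∀ᵐ x ∂(volume : Measure (Rn n)), pm ≤ p x) :
    ∃ C > (0:ℝ), ∀ u₀ : Rn n → ℝ, Measurable u₀ →
      luxNormR volume p u₀ < ⊤ → luxNormR volume (fun _ => r) u₀ < ⊤ →
      mixedN n p r (fun t x => conv n (gKer n α t) u₀ x)
        ≤ ENNReal.ofReal C * mixedNorm n p r u₀ := by
  obtain ⟨C, hC, h⟩ := stmt4_general n hn α ⟨one_half_pos.trans hα.1, hα.2⟩ r hr1 p hplog hpminus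
  exact ⟨C, hC, fun u₀ hu₀ _ _ => h u₀ hu₀⟩
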